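/- Let G be an n-vertex 15-tough (P2 ∪ P3)-free graph with n ≥ 31, and let S ⊆ V(G) be a cutset with |S| ≤ 3n/4. If G - S has at least two clique components with at least two vertices each, and for every edge uv ∈ E(G) we have deg(u) + deg(v) ≥ |S|, then G has a Hamiltonian cycle. -/

import Mathlib

open SimpleGraph

variable {V : Type*}

/-- The disjoint union `P2 ∪ P3`: edge 0-1, path 2-3-4, on `Fin 5`. -/
def P2P3 : SimpleGraph (Fin 5) := SimpleGraph.fromRel (fun a b =>
  (a = 0 ∧ b = 1) ∨ (a = 2 ∧ b = 3) ∨ (a = 3 ∧ b = 4))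

/-- `G` has no induced subgraph isomorphic to `P2 ∪ P3`. -/
def P2P3Free (G : SimpleGraph V) : Prop :=
  ¬ ∃ f : Fin 5 ↪ V, ∀ a b, P2P3.Adj a b ↔ G.Adj (f a) (f b)

/-- The number of connected components of `G - S`. -/
noncomputable def numComponents [Fintype V] (G : SimpleGraph V) (S : Finset V) : ℕ :=
  Nat.card ((G.induce ((↑S : Set V)ᶜ)).ConnectedComponent)

/-- `G` is `t`-tough: `|S| ≥ t·c(G-S)` whenever `c(G-S) ≥ 2`. -/
def IsTough [Fintype V] (t : ℝ) (G : SimpleGraph V) : Prop :=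
  ∀ S : Finset V, 2 ≤ numComponents G S → t * numComponents G S ≤ S.card


/-!
Toughness bounds the independence number: `12 α ≤ n`. If a vertex outside a cycle has more than `α`
neighbors on it, the successors of these neighbors are not independent, so two of them are adjacent
and the cycle can be rerouted through the vertex. In the same way a cycle absorbs a path whose two
ends have more than `α` common neighbors on the cycle. It therefore suffices to find a cycle into
which everything else can be absorbed.

After shrinking `S`, every vertex of `S` has a neighbor in each component of `G - S` that has an
edge. Because `G` is `(P2 ∪ P3)`-free, the components are cliques, and if some `x ∈ S` misses two
vertices of a component `D₁`, then only one other component `D₂` has an edge, and outside `D₁` the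
vertex `x` is adjacent to all of `D₂` and to nothing else in `G - S`. Two cases remain.
* Every vertex of `S` misses at most one vertex of each component. A cycle through all components
  with at least three vertices then absorbs the rest of the graph.
* Exactly two components `D₁` and `D₂` have an edge, where `|D₂| ≤ |D₁|`. The vertices of `S` with
  at most `α` neighbors in `D₁ ∪ D₂` form a clique together with `D₂`, and a cycle through `D₁` and
  this clique absorbs the rest of the graph.

A vertex in a small component need not have many neighbors on the cycle. Small components are
absorbed together with two vertices of `S` each, all distinct, which Hall's theorem provides.
-/

variable {G : SimpleGraph V}

section Cycles

theorem cycle_chain_coe_iff {α : Type*} {r : α → α → Prop} {l : List α} :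
    Cycle.Chain r (l : Cycle α) ↔ l.IsChain r ∧ ∀ x ∈ l.getLast?, ∀ y ∈ l.head?, r x y := by
  cases l with
  | nil => simp
  | cons a l =>
    rw [Cycle.chain_coe_cons, ← List.cons_append, List.isChain_append]
    simp

theorem exists_isRotated_append_formPerm [DecidableEq V] {l : List V} (hl : l.Nodup) {v z : V}
    (hv : v ∈ l) (hz : z ∈ l) (hvz : v ≠ z) :
    ∃ p q : List V, l ~r p ++ q ∧ p.head? = some (l.formPerm v) ∧ p.getLast? = some z ∧
      q.head? = some (l.formPerm z) ∧ q.getLast? = some v := by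
  have formPerm_eq {x y : V} {t : List V} (h : l ~r x :: y :: t) : l.formPerm x = y := by
    rw [List.formPerm_eq_of_isRotated hl h, List.formPerm_apply_head _ _ _ (h.nodup_iff.1 hl)]
  obtain ⟨q, r, rfl⟩ := List.append_of_mem hv
  have hz' : z ∈ r ++ q := by
    simp only [List.mem_append, List.mem_cons, hvz.symm, false_or] at hz ⊢
    exact hz.symm
  obtain ⟨p₁, p₂, hp⟩ := List.append_of_mem hz'
  have hrot : q ++ v :: r ~r (p₁ ++ [z]) ++ (p₂ ++ [v]) := by
    have : (p₁ ++ [z]) ++ (p₂ ++ [v]) = r ++ (q ++ [v]) := by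
      simpa using congrArg (· ++ [v]) hp.symm
    rw [this]
    simpa using List.isRotated_append (l := q ++ [v]) (l' := r)
  have hrot_z : q ++ v :: r ~r z :: (p₂ ++ [v] ++ p₁) :=
    hrot.trans (by simpa using List.isRotated_append (l := p₁) (l' := z :: p₂ ++ [v]))
  have hrot_v : q ++ v :: r ~r v :: (p₁ ++ z :: p₂) :=
    hrot.trans (by simpa using List.isRotated_append (l := p₁ ++ z :: p₂) (l' := [v]))
  refine ⟨p₁ ++ [z], p₂ ++ [v], hrot, ?_, by simp, ?_, by simp⟩
  · cases p₁ with
    | nil => simpa using (formPerm_eq hrot_v).symm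
    | cons a p₁ => simpa using (formPerm_eq hrot_v).symm
  · cases p₂ with
    | nil => simpa using (formPerm_eq hrot_z).symm
    | cons a p₂ => simpa using (formPerm_eq hrot_z).symm

/-- The vertices of `A` can be arranged in cyclic order with consecutive ones adjacent. A single
edge counts as a cycle of length two; from three vertices on this is a cycle with vertex set `A`. -/
def HasCycleOn (G : SimpleGraph V) (A : Set V) : Prop :=
  ∃ l : List V, l.Nodup ∧ Cycle.Chain G.Adj (l : Cycle V) ∧ ∀ v, v ∈ l ↔ v ∈ A

theorem HasCycleOn.isHamiltonian [Fintype V] [DecidableEq V] (hA : HasCycleOn G Set.univ)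
    (hcard : 3 ≤ Fintype.card V) : G.IsHamiltonian := by
  obtain ⟨l, hnodup, hchain, hmem⟩ := hA
  rw [cycle_chain_coe_iff] at hchain
  have hlength : l.length = Fintype.card V := by
    rw [← List.toFinset_card_of_nodup hnodup, Finset.card_eq_iff_eq_univ]
    ext v
    simp [hmem v]
  have hne : l ≠ [] := List.ne_nil_of_length_pos (by omega)
  have hclose : G.Adj (l.getLast hne) (l.head hne) :=
    hchain.2 _ (List.getLast?_eq_some_getLast hne) _ (List.head?_eq_some_head hne)
  have hlength_walk := Walk.length_ofSupport hne hchain.1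
  have hpath : (Walk.ofSupport l hne hchain.1).IsPath := by
    rwa [Walk.isPath_def, Walk.support_ofSupport]
  refine fun _ ↦ ⟨_, Walk.cons hclose (Walk.ofSupport l hne hchain.1), ?_⟩
  rw [Walk.isHamiltonianCycle_iff_isCycle_and_length_eq, Walk.cons_isCycle_iff, Walk.length_cons]
  refine ⟨⟨hpath, fun hmem_edges ↦ ?_⟩, by omega⟩
  have := hpath.length_eq_one_of_mem_edges (Sym2.eq_swap ▸ hmem_edges)
  omega

/-- Deleting the edges leaving `v` and `z` splits the cycle into two paths; one of them is traversed
backwards, and the successors of `v` and `z` are joined instead. -/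
theorem hasCycleOn_union_of_adj_formPerm [DecidableEq V] {l P : List V} (hl : l.Nodup)
    (hchain : Cycle.Chain G.Adj (l : Cycle V)) (hP : P.IsChain G.Adj) (hPnodup : P.Nodup)
    (hdisj : P.Disjoint l) {u w v z : V} (hu : u ∈ P.head?) (hw : w ∈ P.getLast?) (hv : v ∈ l)
    (hz : z ∈ l) (huv : G.Adj u v) (hwz : G.Adj w z)
    (hadj : G.Adj (l.formPerm v) (l.formPerm z)) :
    HasCycleOn G ({x | x ∈ l} ∪ {x | x ∈ P}) := by
  obtain ⟨p, q, hrot, hp, hp', hq, hq'⟩ := exists_isRotated_append_formPerm hl hv hz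
    fun h ↦ hadj.ne (congrArg _ h)
  have hne {a : V} {t : List V} (h : t.head? = some a) : t ≠ [] := by rintro rfl; simp at h
  rw [Cycle.coe_eq_coe.2 hrot, cycle_chain_coe_iff, List.isChain_append] at hchain
  obtain ⟨⟨hp_chain, hq_chain, -⟩, -⟩ := hchain
  have hmem (x : V) : x ∈ l ↔ x ∈ p ∨ x ∈ q := by rw [hrot.mem_iff, List.mem_append]
  have hpq : (p.reverse ++ q).Nodup :=
    ((List.reverse_perm p).append_right q).nodup_iff.2 (hrot.nodup_iff.1 hl)
  refine ⟨P ++ (p.reverse ++ q), hPnodup.append hpq fun x hx hx' ↦ hdisj hx ?_, ?_, fun x ↦ ?_⟩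
  · simpa [hmem] using hx'
  · have hp_rev : p.reverse.IsChain G.Adj :=
      List.isChain_reverse.2 (hp_chain.imp fun _ _ h ↦ h.symm)
    simp only [Option.mem_def] at hu hw
    simp only [cycle_chain_coe_iff, List.isChain_append, hP, hp_rev, hq_chain, List.head?_append,
      List.getLast?_append, List.head?_reverse, List.getLast?_reverse, hp, hp', hq, hq', hu, hw]
    simpa [hwz] using ⟨hadj, huv.symm⟩
  · simp only [List.mem_append, List.mem_reverse, Set.mem_union, Set.mem_ofPred_eq, hmem]
    tauto

end Cycles

section Absorption

theorem ncard_le_indepNum [Finite V] {I : Set V} (hI : G.IsIndepSet I) : I.ncard ≤ G.indepNum := by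
  lift I to Finset V using I.toFinite
  simpa using hI.card_le_indepNum

/-- A path `P` outside `A` whose two ends (which may coincide) have more than `α(G)` common
neighbors in `A`. Any cycle on `A` can then be rerouted through `P`. -/
structure Absorbable (G : SimpleGraph V) (A : Set V) (P : List V) : Prop where
  isChain : P.IsChain G.Adj
  nodup : P.Nodup
  notMem : ∀ v ∈ P, v ∉ A
  exists_ends : ∃ u ∈ P.head?, ∃ w ∈ P.getLast?, G.indepNum < (A ∩ G.commonNeighbors u w).ncard

theorem Absorbable.mono [Finite V] {A B : Set V} {P : List V} (hP : Absorbable G A P)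
    (hAB : A ⊆ B) (hB : ∀ v ∈ P, v ∉ B) : Absorbable G B P where
  isChain := hP.isChain
  nodup := hP.nodup
  notMem := hB
  exists_ends := by
    obtain ⟨u, hu, w, hw, h⟩ := hP.exists_ends
    exact ⟨u, hu, w, hw, h.trans_le (Set.ncard_le_ncard (by gcongr))⟩

theorem absorbable_singleton {A : Set V} {v : V} (hv : v ∉ A)
    (h : G.indepNum < (A ∩ G.neighborSet v).ncard) : Absorbable G A [v] where
  isChain := by simp
  nodup := by simp
  notMem := by simpa using hv
  exists_ends := ⟨v, by simp, v, by simp, by simpa [commonNeighbors] using h⟩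

/-- A set of more than `α(G)` vertices on a cycle contains two with adjacent successors. -/
theorem Absorbable.hasCycleOn_union [Finite V] {A : Set V} {P : List V} (hP : Absorbable G A P)
    (hA : HasCycleOn G A) : HasCycleOn G (A ∪ {v | v ∈ P}) := by
  classical
  obtain ⟨l, hl, hchain, hmem⟩ := hA
  obtain ⟨u, hu, w, hw, hcard⟩ := hP.exists_ends
  have successors_not_indep :
      ¬ G.IsIndepSet (l.formPerm '' (A ∩ G.commonNeighbors u w)) := fun h ↦ by
    rw [← Set.ncard_image_of_injective _ l.formPerm.injective] at hcard
    exact hcard.not_ge (ncard_le_indepNum h)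
  obtain ⟨v, ⟨hv, huv, -⟩, z, ⟨hz, -, hwz⟩, hadj⟩ :
      ∃ v ∈ A ∩ G.commonNeighbors u w, ∃ z ∈ A ∩ G.commonNeighbors u w,
        G.Adj (l.formPerm v) (l.formPerm z) := by
    by_contra! h
    refine successors_not_indep ?_
    rintro _ ⟨v, hv, rfl⟩ _ ⟨z, hz, rfl⟩ -
    exact h v hv z hz
  obtain rfl : A = {v | v ∈ l} := Set.ext fun v ↦ (hmem v).symm
  exact hasCycleOn_union_of_adj_formPerm hl hchain hP.isChain hP.nodup hP.notMem hu hw hv hz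
    huv hwz hadj

theorem HasCycleOn.union_biUnion_of_absorbable [Finite V] {τ : Type*} {A : Set V}
    (hA : HasCycleOn G A) {T : Finset τ} {P : τ → List V} (hP : ∀ t ∈ T, Absorbable G A (P t))
    (hdisj : (T : Set τ).PairwiseDisjoint fun t ↦ {v | v ∈ P t}) :
    HasCycleOn G (A ∪ ⋃ t ∈ T, {v | v ∈ P t}) := by
  classical
  induction T using Finset.induction_on with
  | empty => simpa using hA
  | insert t T ht ih =>
    rw [Finset.coe_insert, Set.pairwiseDisjoint_insert_of_notMem (by simpa using ht)] at hdisj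
    have absorbable_t : Absorbable G (A ∪ ⋃ t ∈ T, {v | v ∈ P t}) (P t) := by
      have hPt := hP t (Finset.mem_insert_self t T)
      refine hPt.mono Set.subset_union_left fun v hv hv' ↦ ?_
      obtain hv' | hv' := hv'
      · exact hPt.notMem v hv hv'
      · obtain ⟨t', ht', hv'⟩ := Set.mem_iUnion₂.1 hv'
        exact Set.disjoint_left.1 (hdisj.2 t' ht') hv hv'
    have := absorbable_t.hasCycleOn_union
      (ih (fun t' ht' ↦ hP t' (Finset.mem_insert_of_mem ht')) hdisj.1)
    rwa [Set.union_assoc, Set.union_comm (⋃ _ ∈ _, _),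
      ← Finset.set_biUnion_insert t T fun t ↦ {v | v ∈ P t}] at this

theorem HasCycleOn.univ_of_forall_indepNum_lt [Finite V] {A : Set V} (hA : HasCycleOn G A)
    (h : ∀ v ∉ A, G.indepNum < (A ∩ G.neighborSet v).ncard) : HasCycleOn G Set.univ := by
  have := hA.union_biUnion_of_absorbable (T := (Set.toFinite Aᶜ).toFinset) (P := fun v ↦ [v])
    (fun v hv ↦ by
      have hv : v ∉ A := by simpa using hv
      exact absorbable_singleton hv (h v hv))
    (fun v _ w _ hvw ↦ by simpa [eq_comm] using hvw)
  convert this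
  ext v
  simp [em]

end Absorption

section Toughness

variable [Fintype V] {s t : ℝ}

theorem IsTough.mono (ht : IsTough t G) (hst : s ≤ t) : IsTough s G := fun S hS ↦
  (mul_le_mul_of_nonneg_right hst (Nat.cast_nonneg _)).trans (ht S hS)

theorem IsTough.mul_card_le_of_forall_adj (ht : IsTough t G) {ι : Type*} {X : Finset V} {f : V → ι}
    (hf : ∀ ⦃a⦄, a ∉ X → ∀ ⦃b⦄, b ∉ X → G.Adj a b → f a = f b) {K : Finset ι} (hK : 2 ≤ K.card)
    (hKf : ∀ k ∈ K, ∃ v ∉ X, f v = k) : t * K.card ≤ X.card := by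
  let g : (G.induce (X : Set V)ᶜ).ConnectedComponent → ι :=
    SimpleGraph.ConnectedComponent.lift (fun v ↦ f v) fun v w p hp ↦ by
      induction p with
      | nil => rfl
      | @cons a b _ hab _ ih => exact (hf a.2 b.2 hab).trans (ih hp.of_cons)
  have hK_le : K.card ≤ numComponents G X := by
    have hsub : (K : Set ι) ⊆ Set.range g := fun k hk ↦ by
      obtain ⟨v, hv, rfl⟩ := hKf k hk
      exact ⟨(G.induce (X : Set V)ᶜ).connectedComponentMk ⟨v, by simpa using hv⟩, rfl⟩
    rw [← Set.ncard_coe_finset, numComponents, ← Set.ncard_univ]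
    rw [← Set.image_univ] at hsub
    exact (Set.ncard_le_ncard hsub).trans (Set.ncard_image_le)
  obtain hneg | hpos := le_total t 0
  · exact (mul_nonpos_of_nonpos_of_nonneg hneg (by positivity)).trans (by positivity)
  · exact (mul_le_mul_of_nonneg_left (by exact_mod_cast hK_le) hpos).trans (ht X (hK.trans hK_le))

theorem IsTough.add_one_mul_indepNum_le (ht : IsTough t G) (hindep : 2 ≤ G.indepNum) :
    (t + 1) * G.indepNum ≤ Fintype.card V := by
  classical
  obtain ⟨I, hI⟩ := G.exists_isNIndepSet_indepNum
  have hle : t * I.card ≤ Iᶜ.card :=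
    ht.mul_card_le_of_forall_adj (f := id)
      (fun a ha b hb hab ↦ (hI.isIndepSet (by simpa using ha) (by simpa using hb) hab.ne hab).elim)
      (hI.card_eq ▸ hindep) (fun v hv ↦ ⟨v, by simpa using hv, rfl⟩)
  have hcard : (I.card : ℝ) + Iᶜ.card = Fintype.card V := mod_cast Finset.card_add_card_compl I
  rw [hI.card_eq] at hle hcard
  linarith

theorem IsTough.mul_card_add_one_le_of_forall_adj_mem (ht : IsTough t G) {I N : Finset V}
    (hne : I.Nonempty) (hN : ∀ a ∈ I, ∀ b, G.Adj a b → b ∈ N)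
    (hdisj : Disjoint I N) {v : V} (hvI : v ∉ I) (hvN : v ∉ N) :
    t * (I.card + 1) ≤ N.card := by
  classical
  let f (x : V) : Option V := if x ∈ I then some x else none
  have hle : t * I.insertNone.card ≤ N.card := by
    refine ht.mul_card_le_of_forall_adj (f := f) (fun a ha b hb hab ↦ ?_)
      (by simpa using hne.card_pos) (fun k hk ↦ ?_)
    · have haI : a ∉ I := fun h ↦ hb (hN a h b hab)
      have hbI : b ∉ I := fun h ↦ ha (hN b h a hab.symm)
      simp [f, haI, hbI]
    · cases k with
      | none => exact ⟨v, hvN, by simp [f, hvI]⟩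
      | some x =>
        have hx : x ∈ I := by simpa using hk
        exact ⟨x, Finset.disjoint_left.1 hdisj hx, by simp [f, hx]⟩
  simpa using hle

end Toughness

section ForbiddenSubgraph

theorem P2P3Free.exists_adj (hfree : P2P3Free G) {p q x y z : V} (hpq : G.Adj p q)
    (hxy : G.Adj x y) (hyz : G.Adj y z) (hne : x ≠ z) (hxz : ¬ G.Adj x z) :
    ∃ a ∈ ({p, q} : Set V), ∃ b ∈ ({x, y, z} : Set V), G.Adj a b := by
  by_contra! h
  simp only [Set.mem_insert_iff, Set.mem_singleton_iff, forall_eq_or_imp, forall_eq] at h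
  obtain ⟨⟨hpx, hpy, hpz⟩, hqx, hqy, hqz⟩ := h
  have ne_of_not_adj {a b c : V} (hab : ¬ G.Adj a b) (hcb : G.Adj c b) : a ≠ c := by
    rintro rfl; exact hab hcb
  have hinj : Function.Injective ![p, q, x, y, z] := by
    have := hpq.ne
    have := hxy.ne
    have := hyz.ne
    have := ne_of_not_adj hpy hxy
    have := ne_of_not_adj hpz hyz
    have := ne_of_not_adj hpy hyz.symm
    have := ne_of_not_adj hqy hxy
    have := ne_of_not_adj hqz hyz
    have := ne_of_not_adj hqy hyz.symm
    intro i j hij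
    fin_cases i <;> fin_cases j <;> simp_all [eq_comm]
  refine hfree ⟨⟨![p, q, x, y, z], hinj⟩, fun a b ↦ ?_⟩
  fin_cases a <;> fin_cases b <;>
    simp_all [P2P3, SimpleGraph.fromRel_adj, G.adj_comm]

end ForbiddenSubgraph

section PathThrough

/-- There is a path from `x` to `y` whose interior visits exactly the vertices of `B`. The ends are
not required to lie outside `B`; if they do not, the "path" is only a walk. -/
def HasPathThrough (G : SimpleGraph V) (B : Finset V) (x y : V) : Prop :=
  ∃ l : List V, l.Perm B.toList ∧ (x :: (l ++ [y])).IsChain G.Adj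

theorem hasPathThrough_singleton {x y a : V} (hx : G.Adj x a) (hy : G.Adj y a) :
    HasPathThrough G {a} x y :=
  ⟨[a], by simp, by simp [hx, hy.symm]⟩

theorem hasPathThrough_of_isClique {B : Finset V} (hB : G.IsClique (B : Set V)) {a b x y : V}
    (ha : a ∈ B) (hb : b ∈ B) (hab : a ≠ b) (hx : G.Adj x a) (hy : G.Adj y b) :
    HasPathThrough G B x y := by
  classical
  let m := ((B.erase a).erase b).toList
  have hperm : (a :: (m ++ [b])).Perm B.toList := by
    refine (List.Perm.cons a (List.perm_append_singleton b m)).trans ?_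
    refine (List.perm_ext_iff_of_nodup ?_ B.nodup_toList).2 fun v ↦ ?_
    · simpa [m, hab] using Finset.nodup_toList _
    · simp only [m, List.mem_cons, Finset.mem_toList, Finset.mem_erase]
      grind
  have hchain : (a :: (m ++ [b])).IsChain G.Adj := by
    refine List.Pairwise.isChain ((hperm.nodup_iff.2 B.nodup_toList).imp_of_mem ?_)
    intro v w hv hw hvw
    rw [hperm.mem_iff, Finset.mem_toList] at hv hw
    exact hB hv hw hvw
  refine ⟨_, hperm, List.isChain_cons.2 ⟨by simpa using hx, ?_⟩⟩
  refine List.isChain_append.2 ⟨hchain, by simp, ?_⟩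
  rw [← List.cons_append, List.getLast?_concat]
  simpa using hy.symm

theorem exists_isChain_of_isChain_hasPathThrough (L : List (V × Finset V)) (p : V × Finset V)
    (hL : (L ++ [p]).IsChain fun q r ↦ HasPathThrough G q.2 q.1 r.1) :
    ∃ l : List V, l.Perm (L.flatMap fun q ↦ q.1 :: q.2.toList) ∧ (l ++ [p.1]).IsChain G.Adj ∧
      (l ++ [p.1]).head? = (L ++ [p]).head?.map Prod.fst := by
  induction L with
  | nil => exact ⟨[], by simp⟩
  | cons q L ih =>
    rw [List.cons_append, List.isChain_cons] at hL
    obtain ⟨l, hperm, hchain, hhead⟩ := ih hL.2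
    obtain ⟨r, hr⟩ : ∃ r, (L ++ [p]).head? = some r := by cases L <;> simp
    obtain ⟨m, hm, hmchain⟩ := hL.1 r hr
    refine ⟨q.1 :: (m ++ l), by simpa using (hm.append hperm).cons q.1, ?_, by simp⟩
    have : q.1 :: (m ++ l) ++ [p.1] = (q.1 :: m) ++ (l ++ [p.1]) := by simp
    rw [← List.cons_append, List.isChain_append] at hmchain
    rw [this, List.isChain_append]
    refine ⟨hmchain.1, hchain, ?_⟩
    simpa [hhead, hr] using hmchain.2.2

theorem hasCycleOn_of_chain_hasPathThrough {L : List (V × Finset V)} (hne : L ≠ [])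
    (hL : Cycle.Chain (fun q r ↦ HasPathThrough G q.2 q.1 r.1) (L : Cycle (V × Finset V)))
    (hnodup : (L.flatMap fun q ↦ q.1 :: q.2.toList).Nodup) :
    HasCycleOn G {v | ∃ q ∈ L, v = q.1 ∨ v ∈ q.2} := by
  obtain ⟨p, L, rfl⟩ := List.exists_cons_of_ne_nil hne
  rw [Cycle.chain_coe_cons, ← List.cons_append] at hL
  obtain ⟨l, hperm, hchain, hhead⟩ := exists_isChain_of_isChain_hasPathThrough _ _ hL
  have hmem (v : V) : v ∈ l ↔ ∃ q ∈ p :: L, v = q.1 ∨ v ∈ q.2 := by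
    simp only [hperm.mem_iff, List.mem_flatMap, List.mem_cons, Finset.mem_toList]
  refine ⟨l, hperm.nodup_iff.2 hnodup, ?_, hmem⟩
  cases l with
  | nil => exact absurd ((hmem p.1).2 ⟨p, by simp⟩) (by simp)
  | cons a l =>
    obtain rfl : a = p.1 := by simpa using hhead
    exact hchain

end PathThrough

section ClusterCut

/-- `G - S` has edges in two different components: `A` is a union of components of `G - S`
containing an edge and missing an edge. -/
def SeparatesEdges (G : SimpleGraph V) (S : Finset V) : Prop :=
  ∃ A : Set V, (∀ ⦃a⦄, a ∉ S → ∀ ⦃b⦄, b ∉ S → G.Adj a b → (a ∈ A ↔ b ∈ A)) ∧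
    (∃ a ∉ S, ∃ b ∉ S, G.Adj a b ∧ a ∈ A) ∧ ∃ a ∉ S, ∃ b ∉ S, G.Adj a b ∧ a ∉ A

theorem separatesEdges_of_connectedComponent {S : Finset V}
    {D₁ D₂ : (G.induce (S : Set V)ᶜ).ConnectedComponent} (hne : D₁ ≠ D₂)
    (h₁ : D₁.supp.Nontrivial) (h₂ : D₂.supp.Nontrivial) : SeparatesEdges G S := by
  have exists_edge {D : (G.induce (S : Set V)ᶜ).ConnectedComponent} (hD : D.supp.Nontrivial) :
      ∃ a b, (G.induce (S : Set V)ᶜ).Adj a b ∧ a ∈ D.supp := by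
    obtain ⟨a, ha, b, hb, hab⟩ := hD
    obtain ⟨c, hc⟩ := (D.reachable_of_mem_supp ha hb).nonempty_neighborSet_left hab
    exact ⟨a, c, hc, ha⟩
  obtain ⟨a, b, hab, ha⟩ := exists_edge h₁
  obtain ⟨c, d, hcd, hc⟩ := exists_edge h₂
  refine ⟨Subtype.val '' D₁.supp, fun x hx y hy hxy ↦ ?_,
    ⟨a, a.2, b, b.2, hab, Set.mem_image_of_mem _ ha⟩, c, c.2, d, d.2, hcd, ?_⟩
  · have hadj : (G.induce (S : Set V)ᶜ).Adj ⟨x, hx⟩ ⟨y, hy⟩ := hxy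
    simpa [hx, hy] using D₁.mem_supp_congr_adj hadj
  · rw [Subtype.val_injective.mem_set_image]
    exact fun hc' ↦ hne (hc'.symm.trans hc)

theorem P2P3Free.adj_trans_of_separatesEdges (hfree : P2P3Free G) {S : Finset V}
    (hS : SeparatesEdges G S) {a b c : V} (ha : a ∉ S) (hb : b ∉ S) (hc : c ∉ S)
    (hab : G.Adj a b) (hbc : G.Adj b c) (hac : a ≠ c) : G.Adj a c := by
  obtain ⟨A, hA, ⟨p, hp, q, hq, hpq, hpA⟩, p', hp', q', hq', hpq', hpA'⟩ := hS
  wlog haA : a ∉ A generalizing A p q p' q'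
  · exact this Aᶜ (fun x hx y hy hxy ↦ not_congr (hA hx hy hxy)) p' hp' q' hq' hpq' hpA' p hp q hq
      hpq (not_not.2 hpA) (not_not.2 (not_not.1 haA))
  by_contra h
  obtain ⟨v, hv, w, hw, hvw⟩ := hfree.exists_adj hpq hab hbc hac h
  have hbA : b ∉ A := (hA ha hb hab).not.1 haA
  have hcA : c ∉ A := (hA hb hc hbc).not.1 hbA
  have hqA : q ∈ A := (hA hp hq hpq).1 hpA
  have hv : v ∉ S ∧ v ∈ A := by rcases hv with rfl | rfl <;> exact ⟨‹_›, ‹_›⟩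
  have hw : w ∉ S ∧ w ∉ A := by rcases hw with rfl | rfl | rfl <;> exact ⟨‹_›, ‹_›⟩
  exact hw.2 ((hA hv.1 hw.1 hvw).1 hv.2)

variable [Fintype V] [DecidableEq V]

/-- The components of `G - S`, listed as the parts of `P`, are cliques, at least two of them have
an edge, and every vertex of `S` has a neighbor in each component that has an edge. -/
structure IsClusterCut (G : SimpleGraph V) {S : Finset V} (P : Finpartition Sᶜ) : Prop where
  isClique : ∀ E ∈ P.parts, G.IsClique (E : Set V)
  eq_of_adj : ∀ ⦃E⦄, E ∈ P.parts → ∀ ⦃F⦄, F ∈ P.parts → ∀ ⦃a⦄, a ∈ E → ∀ ⦃b⦄, b ∈ F →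
    G.Adj a b → E = F
  exists_nontrivial_ne : ∀ E, ∃ F ∈ P.parts, F ≠ E ∧ F.Nontrivial
  exists_adj : ∀ x ∈ S, ∀ E ∈ P.parts, E.Nontrivial → ∃ v ∈ E, G.Adj x v

theorem P2P3Free.exists_finpartition_mem_part_iff (hfree : P2P3Free G) {S : Finset V}
    (hS : SeparatesEdges G S) :
    ∃ P : Finpartition Sᶜ, ∀ a ∉ S, ∀ b, b ∈ P.part a ↔ b ∉ S ∧ (a = b ∨ G.Adj a b) := by
  classical
  let r : Setoid V :=
    { r a b := a = b ∨ a ∉ S ∧ b ∉ S ∧ G.Adj a b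
      iseqv :=
        { refl _ := .inl rfl
          symm h := h.imp Eq.symm fun h ↦ ⟨h.2.1, h.1, h.2.2.symm⟩
          trans := by
            rintro a b c (rfl | hab) hbc
            · exact hbc
            obtain rfl | hbc := hbc
            · exact .inr hab
            · exact or_iff_not_imp_left.2 fun hac ↦ ⟨hab.1, hbc.2.1,
                hfree.adj_trans_of_separatesEdges hS hab.1 hab.2.1 hbc.2.1 hab.2.2 hbc.2.2 hac⟩ } }
  refine ⟨Finpartition.ofSetSetoid r Sᶜ, fun a ha b ↦
    (Finpartition.mem_part_ofSetSetoid_iff_rel _).trans ?_⟩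
  change a ∈ Sᶜ ∧ b ∈ Sᶜ ∧ (a = b ∨ a ∉ S ∧ b ∉ S ∧ G.Adj a b) ↔ _
  simp only [Finset.mem_compl]
  tauto

theorem P2P3Free.exists_finpartition_isClique (hfree : P2P3Free G) {S : Finset V}
    (hS : SeparatesEdges G S) :
    ∃ P : Finpartition Sᶜ, (∀ E ∈ P.parts, G.IsClique (E : Set V)) ∧
      (∀ ⦃E⦄, E ∈ P.parts → ∀ ⦃F⦄, F ∈ P.parts → ∀ ⦃a⦄, a ∈ E → ∀ ⦃b⦄, b ∈ F →
        G.Adj a b → E = F) ∧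
      ∀ E, ∃ F ∈ P.parts, F ≠ E ∧ F.Nontrivial := by
  obtain ⟨P, mem_part⟩ := hfree.exists_finpartition_mem_part_iff hS
  have notMem {E : Finset V} {a : V} (hE : E ∈ P.parts) (ha : a ∈ E) : a ∉ S := by
    simpa using P.subset hE ha
  have part_mem {a : V} (ha : a ∉ S) : P.part a ∈ P.parts := P.part_mem.2 (by simpa using ha)
  have part_eq {E : Finset V} {a : V} (hE : E ∈ P.parts) (ha : a ∈ E) : P.part a = E :=
    P.part_eq_of_mem hE ha
  refine ⟨P, fun E hE a ha b hb hab ↦ ?_, fun E hE F hF a ha b hb hab ↦ ?_, ?_⟩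
  · rw [Finset.mem_coe, ← part_eq hE ha, mem_part a (notMem hE ha)] at hb
    exact hb.2.resolve_left hab
  · refine P.eq_of_mem_parts hE hF ?_ hb
    rw [← part_eq hE ha, mem_part a (notMem hE ha)]
    exact ⟨notMem hF hb, .inr hab⟩
  · obtain ⟨A, hA, ⟨p, hp, q, hq, hpq, hpA⟩, p', hp', q', hq', hpq', hpA'⟩ := hS
    have nontrivial_part {a b : V} (ha : a ∉ S) (hb : b ∉ S) (hab : G.Adj a b) :
        (P.part a).Nontrivial :=
      ⟨a, (mem_part a ha a).2 ⟨ha, .inl rfl⟩, b, (mem_part a ha b).2 ⟨hb, .inr hab⟩, hab.ne⟩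
    have part_ne : P.part p' ≠ P.part p := fun heq ↦ by
      have : p ∈ P.part p' := heq ▸ (mem_part p hp p).2 ⟨hp, .inl rfl⟩
      obtain rfl | hadj := ((mem_part p' hp' p).1 this).2
      · exact hpA' hpA
      · exact hpA' ((hA hp' hp hadj).2 hpA)
    intro E
    by_cases h : P.part p = E
    · exact ⟨_, part_mem hp', h ▸ part_ne, nontrivial_part hp' hq' hpq'⟩
    · exact ⟨_, part_mem hp, h, nontrivial_part hp hq hpq⟩

/-- Take `S` minimal: if `x ∈ S` had no neighbor in a component with an edge, `S \ {x}` would still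
separate edges. -/
theorem P2P3Free.exists_isClusterCut (hfree : P2P3Free G) {S : Finset V}
    (hS : SeparatesEdges G S) : ∃ T ⊆ S, ∃ P : Finpartition Tᶜ, IsClusterCut G P := by
  obtain ⟨T, hTS, hT, hmin⟩ := exists_minimal_le_of_wellFoundedLT (SeparatesEdges G) S hS
  obtain ⟨P, isClique, eq_of_adj, exists_nontrivial_ne⟩ := hfree.exists_finpartition_isClique hT
  refine ⟨T, hTS, P, isClique, eq_of_adj, exists_nontrivial_ne, fun x hx E hE hEnt ↦ ?_⟩
  by_contra! hxE
  have edge {E : Finset V} (hE : E ∈ P.parts) (hEnt : E.Nontrivial) :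
      ∃ a ∈ E, a ∉ T.erase x ∧ ∃ b ∉ T.erase x, G.Adj a b := by
    obtain ⟨a, ha, b, hb, hab⟩ := hEnt
    have notMem {v : V} (hv : v ∈ E) : v ∉ T.erase x := fun h ↦
      Finset.mem_compl.1 (P.subset hE hv) (Finset.mem_of_mem_erase h)
    exact ⟨a, ha, notMem ha, b, notMem hb, isClique E hE ha hb hab⟩
  have closed {a b : V} (ha : a ∈ E) (hb : b ∉ T.erase x) (hab : G.Adj a b) : b ∈ E := by
    have hbx : b ≠ x := by rintro rfl; exact hxE a ha hab.symm
    obtain ⟨F, hF, hbF⟩ := P.exists_mem (a := b) (by simpa [hbx] using hb)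
    rwa [eq_of_adj hE hF ha hbF hab]
  obtain ⟨F, hF, hFE, hFnt⟩ := exists_nontrivial_ne E
  have : SeparatesEdges G (T.erase x) := by
    obtain ⟨a, ha, haT, b, hb, hab⟩ := edge hE hEnt
    obtain ⟨c, hc, hcT, d, hd, hcd⟩ := edge hF hFnt
    exact ⟨E, fun v hv w hw hvw ↦ ⟨fun h ↦ closed h hw hvw, fun h ↦ closed h hv hvw.symm⟩,
      ⟨a, haT, b, hb, hab, ha⟩, c, hcT, d, hd, hcd, fun h ↦ hFE (P.eq_of_mem_parts hF hE hc h)⟩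
  exact Finset.notMem_erase x T (hmin this (Finset.erase_subset x T) hx)

end ClusterCut

section AlmostDominates

/-- `x` is adjacent to all vertices of `E` with at most one exception. -/
def AlmostDominates (G : SimpleGraph V) (x : V) (E : Finset V) : Prop :=
  ((E : Set V) \ G.neighborSet x).Subsingleton

theorem not_almostDominates_iff {x : V} {E : Finset V} :
    ¬ AlmostDominates G x E ↔ ∃ y ∈ E, ∃ z ∈ E, y ≠ z ∧ ¬ G.Adj x y ∧ ¬ G.Adj x z := by
  rw [AlmostDominates, Set.not_subsingleton_iff]
  simp only [Set.Nontrivial, Set.mem_sdiff, Finset.mem_coe, mem_neighborSet]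
  grind

theorem AlmostDominates.exists_adj_ne {x : V} {E : Finset V} (h : AlmostDominates G x E)
    (hE : 3 ≤ E.card) (a : V) : ∃ b ∈ E, b ≠ a ∧ G.Adj x b := by
  classical
  by_contra! hcontra
  have hsub : ((E.erase a : Finset V) : Set V) ⊆ (E : Set V) \ G.neighborSet x := fun b hb ↦ by
    obtain ⟨hba, hbE⟩ := Finset.mem_erase.1 hb
    exact ⟨hbE, hcontra b hbE hba⟩
  have hle := Finset.card_le_one_iff_subsingleton.2 (h.anti hsub)
  have := Finset.pred_card_le_card_erase (s := E) (a := a)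
  omega

theorem AlmostDominates.hasPathThrough {B : Finset V} (hB : G.IsClique (B : Set V))
    (hcard : 3 ≤ B.card) {x y : V} (hx : AlmostDominates G x B) (hy : AlmostDominates G y B) :
    HasPathThrough G B x y := by
  obtain ⟨a, ha, -, hxa⟩ := hx.exists_adj_ne hcard x
  obtain ⟨b, hb, hba, hyb⟩ := hy.exists_adj_ne hcard a
  exact hasPathThrough_of_isClique hB ha hb hba.symm hxa hyb

end AlmostDominates

section ClusterCutNeighbors

variable [Fintype V] [DecidableEq V] {S : Finset V} {P : Finpartition Sᶜ}

theorem notMem_of_mem_parts {E : Finset V} (hE : E ∈ P.parts) {v : V} (hv : v ∈ E) : v ∉ S := by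
  simpa using P.subset hE hv

namespace IsClusterCut

theorem eq_of_adj_of_not_almostDominates (hP : IsClusterCut G P) (hfree : P2P3Free G) {x : V}
    {E F F' : Finset V} (hE : E ∈ P.parts) (hxE : ¬ AlmostDominates G x E) (hF : F ∈ P.parts)
    (hFE : F ≠ E) (hF' : F' ∈ P.parts) (hFE' : F' ≠ E) {a b : V} (ha : a ∈ F) (hb : b ∈ F')
    (hxa : G.Adj x a) (hxb : G.Adj x b) : F = F' := by
  obtain ⟨y, hy, z, hz, hyz, hxy, hxz⟩ := not_almostDominates_iff.1 hxE
  by_contra hne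
  obtain ⟨p, hp, q, hq, hpq⟩ := hfree.exists_adj (hP.isClique E hE hy hz hyz) hxa.symm hxb
    (fun hab ↦ hne (P.eq_of_mem_parts hF hF' ha (hab ▸ hb)))
    (fun hab ↦ hne (hP.eq_of_adj hF hF' ha hb hab))
  have hpE : p ∈ E := by rcases hp with rfl | rfl <;> assumption
  rcases hq with rfl | rfl | rfl
  · exact hFE (hP.eq_of_adj hE hF hpE ha hpq).symm
  · rcases hp with rfl | rfl
    exacts [hxy hpq.symm, hxz hpq.symm]
  · exact hFE' (hP.eq_of_adj hE hF' hpE hb hpq).symm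

theorem adj_of_not_almostDominates (hP : IsClusterCut G P) (hfree : P2P3Free G) {x : V}
    (hx : x ∈ S) {E F : Finset V} (hE : E ∈ P.parts) (hxE : ¬ AlmostDominates G x E)
    (hF : F ∈ P.parts) (hFE : F ≠ E) {a b : V} (ha : a ∈ F) (hb : b ∈ F) (hxa : G.Adj x a) :
    G.Adj x b := by
  obtain ⟨y, hy, z, hz, hyz, hxy, hxz⟩ := not_almostDominates_iff.1 hxE
  by_contra hxb
  obtain ⟨p, hp, q, hq, hpq⟩ := hfree.exists_adj (hP.isClique E hE hy hz hyz) hxa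
    (hP.isClique F hF ha hb (by rintro rfl; exact hxb hxa))
    (by rintro rfl; exact notMem_of_mem_parts hF hb hx) hxb
  have hpE : p ∈ E := by rcases hp with rfl | rfl <;> assumption
  rcases hq with rfl | rfl | rfl
  · rcases hp with rfl | rfl
    exacts [hxy hpq.symm, hxz hpq.symm]
  · exact hFE (hP.eq_of_adj hE hF hpE ha hpq).symm
  · exact hFE (hP.eq_of_adj hE hF hpE hb hpq).symm

theorem forall_adj_of_not_almostDominates (hP : IsClusterCut G P) (hfree : P2P3Free G)
    {x : V} (hx : x ∈ S) {E E' : Finset V} (hE : E ∈ P.parts) (hxE : ¬ AlmostDominates G x E)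
    (hE' : E' ∈ P.parts) (hnt : E'.Nontrivial) (hne : E' ≠ E) :
    (∀ v ∈ E', G.Adj x v) ∧
      ∀ F ∈ P.parts, F ≠ E → F ≠ E' → F.card ≤ 1 ∧ ∀ v ∈ F, ¬ G.Adj x v := by
  obtain ⟨v, hv, hxv⟩ := hP.exists_adj x hx E' hE' hnt
  have not_adj {F : Finset V} (hF : F ∈ P.parts) (hFE : F ≠ E) (hFE' : F ≠ E') {w : V}
      (hw : w ∈ F) : ¬ G.Adj x w := fun hxw ↦
    hFE' (hP.eq_of_adj_of_not_almostDominates hfree hE hxE hF hFE hE' hne hw hv hxw hxv)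
  refine ⟨fun w hw ↦ hP.adj_of_not_almostDominates hfree hx hE hxE hE' hne hv hw hxv,
    fun F hF hFE hFE' ↦ ⟨?_, fun w hw ↦ not_adj hF hFE hFE' hw⟩⟩
  by_contra! hcard
  obtain ⟨w, hw, hxw⟩ := hP.exists_adj x hx F hF (Finset.one_lt_card_iff_nontrivial.1 hcard)
  exact not_adj hF hFE hFE' hw hxw

end IsClusterCut

end ClusterCutNeighbors

section Counting

variable [DecidableEq V]

/-- The vertices lying in a part with at least three vertices. -/
def bigVerts {s : Finset V} (P : Finpartition s) : Set V :=
  {v | ∃ E ∈ P.parts, v ∈ E ∧ 2 < E.card}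

theorem card_le_ncard_bigVerts_inter [Finite V] {s : Finset V} (P : Finpartition s) {u w : V}
    (hu : ∀ E ∈ P.parts, AlmostDominates G u E) (hw : ∀ E ∈ P.parts, AlmostDominates G w E) :
    s.card ≤ (bigVerts P ∩ G.commonNeighbors u w).ncard + 2 * P.parts.card := by
  obtain ⟨X, hX⟩ := (bigVerts P ∩ G.commonNeighbors u w).toFinite.exists_finset_coe
  have card_part_sdiff {E : Finset V} (hE : E ∈ P.parts) : (E \ X).card ≤ 2 := by
    by_cases hbig : 2 < E.card
    · have hsub : ((E \ X : Finset V) : Set V) ⊆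
          ((E : Set V) \ G.neighborSet u) ∪ ((E : Set V) \ G.neighborSet w) := by
        rw [Finset.coe_sdiff, hX, commonNeighbors, ← Set.sdiff_inter]
        rintro v ⟨hvE, hv⟩
        exact ⟨hvE, fun hv' ↦ hv ⟨⟨E, hE, hvE, hbig⟩, hv'⟩⟩
      have hcard_u := Set.ncard_le_one_iff_subsingleton.2 (hu E hE)
      have hcard_w := Set.ncard_le_one_iff_subsingleton.2 (hw E hE)
      have := (Set.ncard_le_ncard hsub).trans (Set.ncard_union_le _ _)
      rw [Set.ncard_coe_finset] at this
      omega
    · exact (Finset.card_le_card Finset.sdiff_subset).trans (by omega)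
  have hcover : s \ X ⊆ P.parts.biUnion (· \ X) := by
    intro v hv
    obtain ⟨hvs, hvX⟩ := Finset.mem_sdiff.1 hv
    obtain ⟨E, hE, hvE⟩ := P.exists_mem hvs
    exact Finset.mem_biUnion.2 ⟨E, hE, Finset.mem_sdiff.2 ⟨hvE, hvX⟩⟩
  calc s.card ≤ (s \ X).card + X.card := Finset.card_le_card_sdiff_add_card
    _ ≤ P.parts.card * 2 + X.card := by
        gcongr
        exact (Finset.card_le_card hcover).trans
          (Finset.card_biUnion_le_card_mul _ _ _ fun E hE ↦ card_part_sdiff hE)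
    _ = _ := by rw [← hX, Set.ncard_coe_finset, mul_comm, add_comm]

namespace IsClusterCut

variable [Fintype V] {S : Finset V} {P : Finpartition Sᶜ}

theorem exists_ne_mem_parts (hP : IsClusterCut G P) : ∃ E ∈ P.parts, ∃ F ∈ P.parts, E ≠ F := by
  obtain ⟨E, hE, -⟩ := hP.exists_nontrivial_ne ∅
  obtain ⟨F, hF, hFE, -⟩ := hP.exists_nontrivial_ne E
  exact ⟨E, hE, F, hF, hFE.symm⟩

theorem mul_card_parts_le (hP : IsClusterCut G P) {t : ℝ} (ht : IsTough t G) :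
    t * P.parts.card ≤ S.card := by
  refine ht.mul_card_le_of_forall_adj (f := P.part) (fun a ha b hb hab ↦ ?_) ?_ fun E hE ↦ ?_
  · rw [← Finset.mem_compl] at ha hb
    exact hP.eq_of_adj (P.part_mem.2 ha) (P.part_mem.2 hb) (P.mem_part_self.2 ha)
      (P.mem_part_self.2 hb) hab
  · obtain ⟨E, hE, F, hF, hne⟩ := hP.exists_ne_mem_parts
    exact Finset.one_lt_card.2 ⟨E, hE, F, hF, hne⟩
  · obtain ⟨v, hv⟩ := P.nonempty_of_mem_parts hE
    exact ⟨v, notMem_of_mem_parts hE hv, P.part_eq_of_mem hE hv⟩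

theorem nonempty (hP : IsClusterCut G P) {t : ℝ} (ht : IsTough t G) (ht₀ : 0 < t) :
    S.Nonempty := by
  obtain ⟨E, hE, -⟩ := hP.exists_ne_mem_parts
  have hparts : (0 : ℝ) < P.parts.card := by exact_mod_cast Finset.card_pos.2 ⟨E, hE⟩
  refine Finset.card_pos.1 ?_
  exact_mod_cast (mul_pos ht₀ hparts).trans_le (hP.mul_card_parts_le ht)

theorem two_le_indepNum (hP : IsClusterCut G P) : 2 ≤ G.indepNum := by
  obtain ⟨E, hE, F, hF, hne⟩ := hP.exists_ne_mem_parts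
  obtain ⟨a, ha⟩ := P.nonempty_of_mem_parts hE
  obtain ⟨b, hb⟩ := P.nonempty_of_mem_parts hF
  have hab : a ≠ b := fun h ↦ hne (P.eq_of_mem_parts hE hF ha (h ▸ hb))
  have hindep : G.IsIndepSet {a, b} := by
    rw [← isClique_compl, isClique_pair]
    exact fun _ ↦ (compl_adj _ _ _).2 ⟨hab, fun h ↦ hne (hP.eq_of_adj hE hF ha hb h)⟩
  exact (Set.ncard_pair hab).symm.trans_le (ncard_le_indepNum hindep)

theorem mul_indepNum_le (hP : IsClusterCut G P) (ht : IsTough 11 G) :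
    12 * G.indepNum ≤ Fintype.card V := by
  have := ht.add_one_mul_indepNum_le hP.two_le_indepNum
  norm_num at this
  exact_mod_cast this

theorem indepNum_lt_ncard_bigVerts_inter (hP : IsClusterCut G P) (ht : IsTough 11 G)
    (hS : 4 * S.card ≤ 3 * Fintype.card V) {u w : V}
    (hu : ∀ E ∈ P.parts, AlmostDominates G u E) (hw : ∀ E ∈ P.parts, AlmostDominates G w E) :
    G.indepNum < (bigVerts P ∩ G.commonNeighbors u w).ncard := by
  have hparts : 11 * P.parts.card ≤ S.card := by exact_mod_cast hP.mul_card_parts_le ht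
  have hindep := hP.mul_indepNum_le ht
  have hcard := card_le_ncard_bigVerts_inter P hu hw
  have := hP.two_le_indepNum
  have := Finset.card_add_card_compl S
  omega

end IsClusterCut

end Counting

section Linkage

theorem hasPathThrough_pair [DecidableEq V] {a b x y : V} (hab : a ≠ b → G.Adj a b)
    (hx : G.Adj x a) (hy : G.Adj y b) : HasPathThrough G {a, b} x y := by
  obtain rfl | hne := eq_or_ne a b
  · simpa using hasPathThrough_singleton hx hy
  · exact hasPathThrough_of_isClique (by simpa [isClique_pair] using hab) (by simp) (by simp) hne
      hx hy

/-- Every member `E` of `𝓔` gets two vertices `σ (E, true)` and `σ (E, false)` of `S`, each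
adjacent to a vertex of `E` and joined by a path through `E`, all these vertices being distinct. -/
structure IsLinkage (G : SimpleGraph V) (S : Finset V) {𝓔 : Finset (Finset V)}
    (σ : 𝓔 × Bool → V) : Prop where
  injective : Function.Injective σ
  mem : ∀ i, σ i ∈ S
  exists_adj : ∀ i, ∃ v ∈ i.1.1, G.Adj (σ i) v
  hasPathThrough : ∀ E, HasPathThrough G E.1 (σ (E, true)) (σ (E, false))

variable [Fintype V] [DecidableEq V] {S : Finset V} {P : Finpartition Sᶜ}

theorem IsClusterCut.mul_card_add_one_le_of_injOn_part [DecidableRel G.Adj]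
    (hP : IsClusterCut G P) {t : ℝ} (ht : IsTough t G) {R : Finset V} (hR : R ⊆ Sᶜ)
    (hne : R.Nonempty) (hinj : Set.InjOn P.part R) (hcard : ∀ a ∈ R, (P.part a).card ≤ 2) {v : V}
    (hv : v ∉ S) (hvR : P.part v ∉ R.image P.part) :
    t * (R.card + 1) ≤ ({x ∈ S | ∃ a ∈ R, G.Adj x a} : Finset V).card + R.card := by
  have hsub : R ⊆ R.biUnion P.part := fun a ha ↦
    Finset.mem_biUnion.2 ⟨a, ha, P.mem_part_self.2 (hR ha)⟩
  have card_partners : (R.biUnion P.part \ R).card ≤ R.card := by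
    have := Finset.card_biUnion_le_card_mul R P.part 2 hcard
    have := Finset.card_sdiff_add_card_eq_card hsub
    omega
  have hle := ht.mul_card_add_one_le_of_forall_adj_mem (v := v) hne
    (N := {x ∈ S | ∃ a ∈ R, G.Adj x a} ∪ R.biUnion P.part \ R) (fun a ha b hab ↦ ?_) ?_ ?_ ?_
  · refine hle.trans ?_
    exact_mod_cast (Finset.card_union_le _ _).trans (by gcongr)
  · rw [Finset.mem_union, Finset.mem_filter, Finset.mem_sdiff, Finset.mem_biUnion]
    refine or_iff_not_imp_left.2 fun hb ↦ ?_
    have hbS : b ∈ Sᶜ := Finset.mem_compl.2 fun h ↦ hb ⟨h, a, ha, hab.symm⟩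
    have hpart : P.part a = P.part b := hP.eq_of_adj (P.part_mem.2 (hR ha)) (P.part_mem.2 hbS)
      (P.mem_part_self.2 (hR ha)) (P.mem_part_self.2 hbS) hab
    exact ⟨⟨a, ha, hpart ▸ P.mem_part_self.2 hbS⟩, fun hbR ↦ hab.ne (hinj ha hbR hpart)⟩
  · refine Finset.disjoint_union_right.2 ⟨?_, Finset.disjoint_sdiff⟩
    exact Finset.disjoint_left.2 fun a ha ha' ↦
      Finset.mem_compl.1 (hR ha) (Finset.mem_filter.1 ha').1
  · exact fun h ↦ hvR (Finset.mem_image_of_mem _ h)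
  · rw [Finset.mem_union, Finset.mem_filter, Finset.mem_sdiff, Finset.mem_biUnion]
    rintro (⟨h, -⟩ | ⟨⟨a, ha, hva⟩, -⟩)
    · exact hv h
    · exact hvR (Finset.mem_image.2 ⟨a, ha, (P.part_eq_of_mem (P.part_mem.2 (hR ha)) hva).symm⟩)

/-- Hall's condition, obtained from the toughness of `G` by choosing one vertex in each member of
`𝓔` that occurs in `J`. -/
theorem IsClusterCut.card_le_card_biUnion_adj [DecidableRel G.Adj] (hP : IsClusterCut G P)
    (ht : IsTough 3 G) {𝓔 : Finset (Finset V)} (h𝓔 : 𝓔 ⊆ P.parts) (hcard : ∀ E ∈ 𝓔, E.card ≤ 2)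
    {B : Finset V} (hB : B ∈ P.parts) (hB𝓔 : B ∉ 𝓔) {X : Finset V} (hX : X.card ≤ 2)
    {e : 𝓔 × Bool → V} (he : ∀ i, e i ∈ i.1.1) (J : Finset (𝓔 × Bool)) :
    J.card ≤ (J.biUnion fun i ↦ {x ∈ S \ X | G.Adj x (e i)}).card := by
  obtain rfl | hJne := J.eq_empty_or_nonempty
  · simp
  have part_e (i) : P.part (e i) = i.1.1 := P.part_eq_of_mem (h𝓔 i.1.2) (he i)
  obtain ⟨R, hRJ, hinj, himage⟩ := Finset.exists_subset_injOn_image_eq_of_surjOn (f := P.part)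
    (e '' J) (J.image fun i ↦ i.1.1) fun E hE ↦ by
      obtain ⟨i, hi, rfl⟩ := Finset.mem_image.1 hE
      exact ⟨e i, Set.mem_image_of_mem e hi, part_e i⟩
  have card_R : R.card = (J.image fun i ↦ i.1.1).card := by
    rw [← himage, Finset.card_image_of_injOn hinj]
  have card_J : J.card ≤ 2 * R.card := by
    rw [card_R]
    refine Finset.card_le_mul_card_image J 2 fun E _ ↦ ?_
    refine (Finset.card_le_card_of_injOn Prod.snd (fun _ _ ↦ Finset.mem_univ _)
      fun i hi j hj hij ↦ ?_).trans_eq Fintype.card_bool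
    have hi := (Finset.mem_filter.1 hi).2
    have hj := (Finset.mem_filter.1 hj).2
    exact Prod.ext (Subtype.ext (hi.trans hj.symm)) hij
  have hR : R ⊆ Sᶜ ∧ ∀ a ∈ R, (P.part a).card ≤ 2 := by
    refine forall₂_and.1 fun a ha ↦ ?_
    obtain ⟨i, -, rfl⟩ := hRJ ha
    exact ⟨P.subset (h𝓔 i.1.2) (he i), part_e i ▸ hcard _ i.1.2⟩
  obtain ⟨v, hv⟩ := P.nonempty_of_mem_parts hB
  have hle := hP.mul_card_add_one_le_of_injOn_part ht hR.1
    (Finset.image_nonempty.1 (himage ▸ hJne.image _)) hinj hR.2 (notMem_of_mem_parts hB hv) (by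
      rw [himage, P.part_eq_of_mem hB hv]
      exact fun h ↦ by
        obtain ⟨i, -, rfl⟩ := Finset.mem_image.1 h
        exact hB𝓔 i.1.2)
  have hsub : ({x ∈ S | ∃ a ∈ R, G.Adj x a} : Finset V) ⊆
      (J.biUnion fun i ↦ {x ∈ S \ X | G.Adj x (e i)}) ∪ X := fun x hx ↦ by
    obtain ⟨hxS, a, ha, hxa⟩ := Finset.mem_filter.1 hx
    obtain ⟨i, hi, rfl⟩ := hRJ ha
    by_cases hxX : x ∈ X
    · exact Finset.mem_union_right _ hxX
    · exact Finset.mem_union_left _ (Finset.mem_biUnion.2 ⟨i, hi, by simp [hxS, hxX, hxa]⟩)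
  have := (Finset.card_le_card hsub).trans (Finset.card_union_le _ _)
  norm_cast at hle
  omega

theorem IsClusterCut.exists_isLinkage (hP : IsClusterCut G P) (ht : IsTough 3 G)
    {𝓔 : Finset (Finset V)} (h𝓔 : 𝓔 ⊆ P.parts) (hcard : ∀ E ∈ 𝓔, E.card ≤ 2)
    {B : Finset V} (hB : B ∈ P.parts) (hB𝓔 : B ∉ 𝓔) {X : Finset V} (hX : X.card ≤ 2) :
    ∃ σ : 𝓔 × Bool → V, IsLinkage G S σ ∧ ∀ i, σ i ∉ X := by
  classical
  have exists_eq_pair (E : 𝓔) : ∃ a b, E.1 = {a, b} := by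
    have hpos := (P.nonempty_of_mem_parts (h𝓔 E.2)).card_pos
    obtain h | h : E.1.card = 1 ∨ E.1.card = 2 := by have := hcard E E.2; omega
    · obtain ⟨a, ha⟩ := Finset.card_eq_one.1 h
      exact ⟨a, a, by simpa using ha⟩
    · obtain ⟨a, b, -, hab⟩ := Finset.card_eq_two.1 h
      exact ⟨a, b, hab⟩
  choose a b hab using exists_eq_pair
  let e (i : 𝓔 × Bool) : V := if i.2 then a i.1 else b i.1
  have he (i : 𝓔 × Bool) : e i ∈ i.1.1 := by
    dsimp only [e]
    split_ifs <;> simp [hab]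
  obtain ⟨σ, hinj, hσ⟩ := (Finset.all_card_le_biUnion_card_iff_exists_injective _).1
    (hP.card_le_card_biUnion_adj ht h𝓔 hcard hB hB𝓔 hX he)
  simp only [Finset.mem_filter, Finset.mem_sdiff] at hσ
  refine ⟨σ, ⟨hinj, fun i ↦ (hσ i).1.1, fun i ↦ ⟨e i, he i, (hσ i).2⟩, fun E ↦ ?_⟩,
    fun i ↦ (hσ i).1.2⟩
  have hE := hP.isClique E (h𝓔 E.2)
  rw [hab E] at hE ⊢
  exact hasPathThrough_pair (hE (by simp) (by simp)) (hσ (E, true)).2 (hσ (E, false)).2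

end Linkage

section LinkageAbsorption

theorem absorbable_of_perm_toList {A : Set V} {B : Finset V} {l : List V} {x y : V}
    (hl : l.Perm B.toList) (hchain : (x :: (l ++ [y])).IsChain G.Adj) (hxy : x ≠ y) (hxB : x ∉ B)
    (hyB : y ∉ B) (hxA : x ∉ A) (hyA : y ∉ A) (hBA : Disjoint (B : Set V) A)
    (hcommon : G.indepNum < (A ∩ G.commonNeighbors x y).ncard) :
    Absorbable G A (x :: (l ++ [y])) := by
  have mem_l {v : V} : v ∈ l ↔ v ∈ B := hl.mem_iff.trans Finset.mem_toList
  refine ⟨hchain, ?_, ?_, x, rfl, y, List.getLast?_concat (l := x :: l), hcommon⟩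
  · rw [List.nodup_cons, List.nodup_append, hl.nodup_iff]
    simp only [List.mem_append, List.mem_singleton, mem_l, B.nodup_toList, List.nodup_singleton]
    grind
  · simp only [List.mem_cons, List.mem_append, mem_l, List.not_mem_nil]
    rintro v (rfl | hv | rfl | ⟨⟨⟩⟩)
    exacts [hxA, Set.disjoint_left.1 hBA hv, hyA]

variable [Fintype V] [DecidableEq V] {S : Finset V} {P : Finpartition Sᶜ}

theorem IsLinkage.hasCycleOn_univ {𝓔 : Finset (Finset V)} {σ : 𝓔 × Bool → V}
    (hσ : IsLinkage G S σ) (h𝓔 : 𝓔 ⊆ P.parts) {A : Set V} (hA : HasCycleOn G A)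
    (hσA : ∀ i, σ i ∉ A) (hdisj : ∀ E ∈ 𝓔, Disjoint (E : Set V) A)
    (hcover : ∀ E ∈ P.parts, E ∉ 𝓔 → (E : Set V) ⊆ A)
    (hcommon : ∀ E, G.indepNum < (A ∩ G.commonNeighbors (σ (E, true)) (σ (E, false))).ncard)
    (hnbrs : ∀ y ∈ S, y ∉ A → G.indepNum < (A ∩ G.neighborSet y).ncard) :
    HasCycleOn G Set.univ := by
  choose l hperm hchain using hσ.hasPathThrough
  let path (E : 𝓔) : List V := σ (E, true) :: (l E ++ [σ (E, false)])
  have mem_l {E : 𝓔} {v : V} : v ∈ l E ↔ v ∈ E.1 := (hperm E).mem_iff.trans Finset.mem_toList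
  have mem_path {E : 𝓔} {v : V} : v ∈ path E ↔ v ∈ E.1 ∨ ∃ b, v = σ (E, b) := by
    simp only [path, List.mem_cons, List.mem_append, mem_l, Bool.exists_bool]
    grind
  have σ_notMem (i) {E : 𝓔} : σ i ∉ E.1 := fun h ↦ notMem_of_mem_parts (h𝓔 E.2) h (hσ.mem i)
  have absorbable_path (E : 𝓔) : Absorbable G A (path E) :=
    absorbable_of_perm_toList (hperm E) (hchain E) (hσ.injective.ne (by simp)) (σ_notMem _)
      (σ_notMem _) (hσA _) (hσA _) (hdisj _ E.2) (hcommon E)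
  have disjoint_path : ((Finset.univ : Finset 𝓔) : Set 𝓔).PairwiseDisjoint
      fun E ↦ {v | v ∈ path E} := fun E _ F _ hEF ↦ Set.disjoint_left.2 fun v hvE hvF ↦ by
    rcases mem_path.1 hvE with hvE | ⟨b, rfl⟩ <;> rcases mem_path.1 hvF with hvF | ⟨b', hv⟩
    · exact hEF (Subtype.ext (P.eq_of_mem_parts (h𝓔 E.2) (h𝓔 F.2) hvE hvF))
    · exact σ_notMem _ (hv ▸ hvE)
    · exact σ_notMem _ hvF
    · exact hEF (congrArg Prod.fst (hσ.injective hv))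
  refine (hA.union_biUnion_of_absorbable (fun E _ ↦ absorbable_path E)
    disjoint_path).univ_of_forall_indepNum_lt fun v hv ↦ ?_
  obtain ⟨hvA, hvpath⟩ := not_or.1 hv
  have hvS : v ∈ S := by
    by_contra hvS
    obtain ⟨E, hE, hvE⟩ := P.exists_mem (Finset.mem_compl.2 hvS)
    by_cases hE𝓔 : E ∈ 𝓔
    · exact hvpath (Set.mem_biUnion (x := ⟨E, hE𝓔⟩) (Finset.mem_univ _) (mem_path.2 (.inl hvE)))
    · exact hvA (hcover E hE hE𝓔 hvE)
  exact (hnbrs v hvS hvA).trans_le (Set.ncard_le_ncard (by gcongr; exact Set.subset_union_left))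

theorem IsClusterCut.hasCycleOn_univ_of_isLinkage (hP : IsClusterCut G P) (ht : IsTough 11 G)
    (hS : 4 * S.card ≤ 3 * Fintype.card V) {𝓔 : Finset (Finset V)} (h𝓔 : 𝓔 ⊆ P.parts)
    (hcard : ∀ E ∈ 𝓔, E.card ≤ 2) {σ : 𝓔 × Bool → V} (hσ : IsLinkage G S σ)
    (hdom : ∀ i, ∀ E ∈ P.parts, AlmostDominates G (σ i) E) {C : Set V} (hCS : C ⊆ S)
    (hA : HasCycleOn G (C ∪ {v | ∃ E ∈ P.parts \ 𝓔, v ∈ E})) (hσC : ∀ i, σ i ∉ C)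
    (hnbrs : ∀ y ∈ S, y ∉ C →
      G.indepNum < ({v | ∃ E ∈ P.parts \ 𝓔, v ∈ E} ∩ G.neighborSet y).ncard) :
    HasCycleOn G Set.univ := by
  have mem_parts {E : Finset V} (hE : E ∈ P.parts \ 𝓔) : E ∈ P.parts := Finset.sdiff_subset hE
  refine hσ.hasCycleOn_univ h𝓔 hA ?_ ?_ ?_ (fun E ↦ ?_) fun y hy hyA ↦ ?_
  · rintro i (h | ⟨E, hE, h⟩)
    exacts [hσC i h, notMem_of_mem_parts (mem_parts hE) h (hσ.mem i)]
  · refine fun E hE ↦ Set.disjoint_left.2 ?_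
    rintro v hv (h | ⟨F, hF, h⟩)
    · exact notMem_of_mem_parts (h𝓔 hE) hv (hCS h)
    · obtain rfl := P.eq_of_mem_parts (h𝓔 hE) (mem_parts hF) hv h
      exact (Finset.mem_sdiff.1 hF).2 hE
  · exact fun E hE hE𝓔 v hv ↦ .inr ⟨E, Finset.mem_sdiff.2 ⟨hE, hE𝓔⟩, hv⟩
  · refine (hP.indepNum_lt_ncard_bigVerts_inter ht hS (hdom (E, true)) (hdom (E, false))).trans_le
      (Set.ncard_le_ncard (Set.inter_subset_inter_left _ ?_))
    rintro v ⟨F, hF, hv, hFcard⟩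
    exact .inr ⟨F, Finset.mem_sdiff.2 ⟨hF, fun h ↦ hFcard.not_ge (hcard F h)⟩, hv⟩
  · exact (hnbrs y hy fun h ↦ hyA (.inl h)).trans_le
      (Set.ncard_le_ncard (Set.inter_subset_inter_left _ Set.subset_union_right))

end LinkageAbsorption

section AllAlmostDominate

theorem hasCycleOn_of_forall_hasPathThrough {ι : Type*} [Finite ι] [Nonempty ι]
    {B : ι → Finset V} {x : ι → V} (hpath : ∀ i j, HasPathThrough G (B i) (x i) (x j))
    (hx : Function.Injective x) (hB : Pairwise (Function.onFun Disjoint B))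
    (hxB : ∀ i j, x i ∉ B j) : HasCycleOn G {v | ∃ i, v = x i ∨ v ∈ B i} := by
  have := Fintype.ofFinite ι
  have hcycle := hasCycleOn_of_chain_hasPathThrough (G := G)
    (L := (Finset.univ : Finset ι).toList.map fun i ↦ (x i, B i)) ?_ ?_ ?_
  · simpa using hcycle
  · simp [Finset.univ_nonempty.ne_empty]
  · refine Cycle.chain_of_pairwise fun q hq r hr ↦ ?_
    simp only [Cycle.mem_coe_iff, List.mem_map] at hq hr
    obtain ⟨⟨i, -, rfl⟩, j, -, rfl⟩ := And.intro hq hr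
    exact hpath i j
  · rw [List.flatMap_map, List.nodup_flatMap]
    refine ⟨fun i _ ↦ ?_, (Finset.nodup_toList _).imp fun {i j} hij ↦ ?_⟩
    · simpa using ⟨hxB i i, (B i).nodup_toList⟩
    · have := Finset.disjoint_left.1 (hB hij)
      simp only [Function.onFun, List.disjoint_left, List.mem_cons, Finset.mem_toList]
      rintro v (rfl | hv) (hv' | hv')
      exacts [hij (hx hv'), hxB i j hv', hxB j i (hv' ▸ hv), this hv hv']

variable [Fintype V] [DecidableEq V] {S : Finset V} {P : Finpartition Sᶜ}

namespace IsClusterCut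

theorem exists_isLinkage_embedding (hP : IsClusterCut G P) (ht : IsTough 3 G) {B : Finset V}
    (hB : B ∈ P.parts) (hcard : 2 < B.card) :
    ∃ (σ : {E ∈ P.parts | E.card ≤ 2} × Bool → V) (x : {E ∈ P.parts | 2 < E.card} → V),
      IsLinkage G S σ ∧ Function.Injective x ∧ ∀ i, x i ∈ S ∧ ∀ j, x i ≠ σ j := by
  obtain ⟨σ, hσ, -⟩ := hP.exists_isLinkage ht (Finset.filter_subset _ _)
    (fun E hE ↦ (Finset.mem_filter.1 hE).2) hB
    (fun hB' ↦ hcard.not_ge (Finset.mem_filter.1 hB').2) (X := ∅) (by simp)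
  have card_image_σ : (Finset.univ.image σ).card ≤ {E ∈ P.parts | E.card ≤ 2}.card * 2 := by
    simpa only [Finset.card_univ, Fintype.card_prod, Fintype.card_coe, Fintype.card_bool]
      using Finset.card_image_le (s := Finset.univ) (f := σ)
  have card_add_card : {E ∈ P.parts | E.card ≤ 2}.card + {E ∈ P.parts | 2 < E.card}.card =
      P.parts.card := by
    simpa only [not_le] using Finset.card_filter_add_card_filter_not (s := P.parts) (·.card ≤ 2)
  have hparts : 3 * P.parts.card ≤ S.card := by exact_mod_cast hP.mul_card_parts_le ht
  obtain ⟨x⟩ : Nonempty ({E ∈ P.parts | 2 < E.card} ↪ (S \ Finset.univ.image σ : Finset V)) :=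
    Function.Embedding.nonempty_of_card_le (by
      have := Finset.le_card_sdiff (Finset.univ.image σ) S
      rw [Fintype.card_coe, Fintype.card_coe]
      omega)
  refine ⟨σ, fun i ↦ x i, hσ, Subtype.val_injective.comp x.injective, fun i ↦ ?_⟩
  obtain ⟨hxS, hxσ⟩ := Finset.mem_sdiff.1 (x i).2
  exact ⟨hxS, fun j hj ↦ hxσ (Finset.mem_image.2 ⟨j, Finset.mem_univ _, hj.symm⟩)⟩

theorem hasCycleOn_univ_of_forall_almostDominates (hP : IsClusterCut G P)
    (ht : IsTough 11 G) (hS : 4 * S.card ≤ 3 * Fintype.card V)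
    (hdom : ∀ x ∈ S, ∀ E ∈ P.parts, AlmostDominates G x E) : HasCycleOn G Set.univ := by
  have hcount {u w : V} (hu : u ∈ S) (hw : w ∈ S) :=
    hP.indepNum_lt_ncard_bigVerts_inter ht hS (hdom u hu) (hdom w hw)
  obtain ⟨B, hB, hBcard⟩ : ∃ B ∈ P.parts, 2 < B.card := by
    obtain ⟨x, hx⟩ := hP.nonempty ht (by norm_num)
    obtain ⟨v, ⟨B, hB, -, hcard⟩, -⟩ := Set.nonempty_of_ncard_ne_zero (hcount hx hx).ne_bot
    exact ⟨B, hB, hcard⟩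
  obtain ⟨σ, x, hσ, hx, hxS⟩ := hP.exists_isLinkage_embedding (ht.mono (by norm_num)) hB hBcard
  have : Nonempty {E ∈ P.parts | 2 < E.card} := ⟨B, Finset.mem_filter.2 ⟨hB, hBcard⟩⟩
  have mem_parts (i : {E ∈ P.parts | 2 < E.card}) : i.1 ∈ P.parts := (Finset.mem_filter.1 i.2).1
  have hA := hasCycleOn_of_forall_hasPathThrough (G := G) (B := Subtype.val) (x := x)
    (fun i j ↦ (hdom _ (hxS i).1 i (mem_parts i)).hasPathThrough (hP.isClique i (mem_parts i))
      (Finset.mem_filter.1 i.2).2 (hdom _ (hxS j).1 i (mem_parts i))) hx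
    (fun i j hij ↦ P.disjoint (mem_parts i) (mem_parts j) (Subtype.coe_injective.ne hij))
    fun i j h ↦ notMem_of_mem_parts (mem_parts j) h (hxS i).1
  have mem_sdiff {E : Finset V} : E ∈ P.parts \ {E ∈ P.parts | E.card ≤ 2} ↔
      E ∈ ({E ∈ P.parts | 2 < E.card} : Finset (Finset V)) := by
    grind
  refine hP.hasCycleOn_univ_of_isLinkage ht hS (Finset.filter_subset _ _)
    (fun E hE ↦ (Finset.mem_filter.1 hE).2) hσ (fun i ↦ hdom _ (hσ.mem i)) (C := Set.range x)
    (Set.range_subset_iff.2 fun i ↦ (hxS i).1) ?_ ?_ fun y hy _ ↦ ?_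
  · convert hA using 1
    ext v
    constructor
    · rintro (⟨j, rfl⟩ | ⟨E, hE, hv⟩)
      exacts [⟨j, .inl rfl⟩, ⟨⟨E, mem_sdiff.1 hE⟩, .inr hv⟩]
    · rintro ⟨j, rfl | hv⟩
      exacts [.inl ⟨j, rfl⟩, .inr ⟨j, mem_sdiff.2 j.2, hv⟩]
  · rintro i ⟨j, hj⟩
    exact (hxS j).2 i hj
  · refine (hcount hy hy).trans_le (Set.ncard_le_ncard ?_)
    rintro v ⟨⟨E, hE, hvE, hcard⟩, hv⟩
    exact ⟨⟨E, mem_sdiff.2 (Finset.mem_filter.2 ⟨hE, hcard⟩), hvE⟩, hv.1⟩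

end IsClusterCut

end AllAlmostDominate

section DistinctAttachments

theorem exists_not_and_not_of_ne_top {α : Type*} {r s : Setoid α} (hr : r ≠ ⊤) (hs : s ≠ ⊤) :
    ∃ x y, ¬ r x y ∧ ¬ s x y := by
  obtain ⟨x, y, hrxy⟩ : ∃ x y, ¬ r x y := by simpa [Setoid.eq_top_iff] using hr
  by_contra! hcontra
  have hsxy := hcontra x y hrxy
  refine hs (Setoid.eq_top_iff.2 fun z w ↦ ?_)
  have hxs (z) : s x z := by
    by_cases hrxz : r x z
    · exact s.trans hsxy (hcontra y z fun hryz ↦ hrxy (r.trans hrxz (r.symm hryz)))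
    · exact hcontra x z hrxz
  exact s.trans (s.symm (hxs z)) (hxs w)

/-- The equivalence relation identifying two indices if `N` takes the same singleton value at
both of them. For a family of nonempty sets, inequivalent indices are those which have distinct
representatives. -/
def sameSingleton {ι β : Type*} (N : ι → Set β) : Setoid ι where
  r i j := i = j ∨ ∃ a, N i = {a} ∧ N j = {a}
  iseqv := by
    refine ⟨fun i ↦ .inl rfl, fun h ↦ ?_, fun {i j k} hij hjk ↦ ?_⟩
    · exact h.imp Eq.symm fun ⟨a, ha⟩ ↦ ⟨a, ha.symm⟩
    · obtain rfl | ⟨a, hi, hj⟩ := hij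
      · exact hjk
      · obtain rfl | ⟨b, hj', hk⟩ := hjk
        · exact .inr ⟨a, hi, hj⟩
        · exact .inr ⟨a, hi, hk.trans (hj'.symm.trans hj)⟩

theorem sameSingleton_ne_top {ι β : Type*} [Nontrivial ι] {N : ι → Set β}
    (hN : ∀ a, ∃ i, N i ≠ {a}) : sameSingleton N ≠ ⊤ := fun htop ↦ by
  have h (i j) : sameSingleton N i j := Setoid.eq_top_iff.1 htop i j
  obtain ⟨i, j, hij⟩ := exists_pair_ne ι
  obtain ⟨a, hi, -⟩ := (h i j).resolve_left hij
  obtain ⟨k, hk⟩ := hN a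
  obtain rfl | ⟨b, hi', hk'⟩ := h i k
  exacts [hk hi, hk (hk'.trans (hi'.symm.trans hi))]

theorem exists_ne_of_not_sameSingleton {ι β : Type*} {N : ι → Set β} (hN : ∀ i, (N i).Nonempty)
    {i j : ι} (hij : ¬ sameSingleton N i j) : ∃ a ∈ N i, ∃ b ∈ N j, a ≠ b := by
  by_contra! hcontra
  obtain ⟨a, ha⟩ := hN i
  obtain ⟨b, hb⟩ := hN j
  obtain rfl := hcontra a ha b hb
  exact hij (.inr ⟨a, Set.eq_singleton_iff_unique_mem.2 ⟨ha, fun c hc ↦ hcontra c hc a hb⟩,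
    Set.eq_singleton_iff_unique_mem.2 ⟨hb, fun c hc ↦ (hcontra a ha c hc).symm⟩⟩)

variable [Fintype V] [DecidableEq V] {S : Finset V} {P : Finpartition Sᶜ}

namespace IsClusterCut

theorem exists_adj_ne (hP : IsClusterCut G P) {t : ℝ} (ht : IsTough t G) (ht₀ : 1 / 2 < t)
    {D : Finset V} (hD : D ∈ P.parts) (hDnt : D.Nontrivial) {a : V} (ha : a ∈ D) :
    ∃ x ∈ S, ∃ b ∈ D, b ≠ a ∧ G.Adj x b := by
  by_contra! hcontra
  have adj_mem {u v : V} (hu : u ∈ D) (hua : u ≠ a) (huv : G.Adj u v) : v ∈ D := by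
    have hvS : v ∈ Sᶜ := Finset.mem_compl.2 fun hv ↦ hcontra v hv u hu hua huv.symm
    obtain ⟨E, hE, hvE⟩ := P.exists_mem hvS
    rwa [hP.eq_of_adj hD hE hu hvE huv]
  have hle := ht.mul_card_le_of_forall_adj (X := {a}) (f := fun v ↦ decide (v ∈ D))
    (fun u hu v hv huv ↦ ?_) (K := Finset.univ) (by simp) ?_
  · norm_num at hle
    linarith
  · rw [Finset.mem_singleton] at hu hv
    exact decide_eq_decide.2 ⟨fun h ↦ adj_mem h hu huv, fun h ↦ adj_mem h hv huv.symm⟩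
  · obtain ⟨x, hx⟩ := hP.nonempty ht (by linarith)
    obtain ⟨b, hb, hba⟩ := hDnt.exists_ne a
    have hxD : x ∉ D := fun h ↦ notMem_of_mem_parts hD h hx
    rintro (_ | _) -
    · exact ⟨x, by rintro h; exact hxD (Finset.mem_singleton.1 h ▸ ha), by simpa using hxD⟩
    · exact ⟨b, by simpa using hba, by simpa using hb⟩

theorem exists_distinct_adj (hP : IsClusterCut G P) {t : ℝ} (ht : IsTough t G) (ht₁ : 1 ≤ t)
    {D₁ D₂ : Finset V} (hD₁ : D₁ ∈ P.parts) (hnt₁ : D₁.Nontrivial) (hD₂ : D₂ ∈ P.parts)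
    (hnt₂ : D₂.Nontrivial) : ∃ x ∈ S, ∃ y ∈ S, x ≠ y ∧
      (∃ a ∈ D₁, ∃ b ∈ D₁, a ≠ b ∧ G.Adj x a ∧ G.Adj y b) ∧
      ∃ a ∈ D₂, ∃ b ∈ D₂, a ≠ b ∧ G.Adj x a ∧ G.Adj y b := by
  have : Nontrivial S := by
    obtain ⟨E, hE, F, hF, hne⟩ := hP.exists_ne_mem_parts
    have hparts : (2 : ℝ) ≤ P.parts.card := by
      exact_mod_cast Finset.one_lt_card.2 ⟨E, hE, F, hF, hne⟩
    have hcard : (2 : ℝ) ≤ S.card := by nlinarith [hP.mul_card_parts_le ht]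
    rw [← Fintype.one_lt_card_iff_nontrivial, Fintype.card_coe]
    exact_mod_cast hcard
  let N (D : Finset V) (x : S) : Set V := D ∩ G.neighborSet x
  have nonempty_N {D : Finset V} (hD : D ∈ P.parts) (hnt : D.Nontrivial) (x : S) :
      (N D x).Nonempty := hP.exists_adj x x.2 D hD hnt
  have ne_top {D : Finset V} (hD : D ∈ P.parts) (hnt : D.Nontrivial) :
      sameSingleton (N D) ≠ ⊤ := by
    refine sameSingleton_ne_top fun a ↦ ?_
    by_contra! hcontra
    obtain ⟨y⟩ := ‹Nontrivial S›.to_nonempty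
    have ha : a ∈ N D y := by rw [hcontra]; exact Set.mem_singleton a
    obtain ⟨x, hx, b, hb, hba, hxb⟩ := hP.exists_adj_ne ht (by linarith) hD hnt ha.1
    have : b ∈ N D ⟨x, hx⟩ := ⟨hb, hxb⟩
    rw [hcontra] at this
    exact hba this
  obtain ⟨x, y, h₁, h₂⟩ := exists_not_and_not_of_ne_top (ne_top hD₁ hnt₁) (ne_top hD₂ hnt₂)
  obtain ⟨a₁, ⟨ha₁, hxa₁⟩, b₁, ⟨hb₁, hyb₁⟩, hne₁⟩ :=
    exists_ne_of_not_sameSingleton (nonempty_N hD₁ hnt₁) h₁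
  obtain ⟨a₂, ⟨ha₂, hxa₂⟩, b₂, ⟨hb₂, hyb₂⟩, hne₂⟩ :=
    exists_ne_of_not_sameSingleton (nonempty_N hD₂ hnt₂) h₂
  exact ⟨x, x.2, y, y.2, fun h ↦ h₁ (.inl (Subtype.ext h)),
    ⟨a₁, ha₁, b₁, hb₁, hne₁, hxa₁, hyb₁⟩, a₂, ha₂, b₂, hb₂, hne₂, hxa₂, hyb₂⟩

end IsClusterCut

end DistinctAttachments

section TwoClusters

theorem AlmostDominates.card_le [Finite V] {x : V} {E : Finset V} (h : AlmostDominates G x E) :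
    E.card ≤ (↑E ∩ G.neighborSet x).ncard + 1 := by
  rw [← Set.ncard_coe_finset, ← Set.ncard_inter_add_ncard_sdiff_eq_ncard _ (G.neighborSet x)]
  gcongr
  exact Set.ncard_le_one_iff_subsingleton.2 h

theorem hasCycleOn_of_isClique_of_isClique [DecidableEq V] {B C : Finset V}
    (hB : G.IsClique (B : Set V)) (hC : G.IsClique (C : Set V)) (hBC : Disjoint B C) {x y : V}
    (hxy : x ≠ y) (hx : x ∉ B ∪ C) (hy : y ∉ B ∪ C)
    (hBadj : ∃ a ∈ B, ∃ b ∈ B, a ≠ b ∧ G.Adj x a ∧ G.Adj y b)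
    (hCadj : ∃ a ∈ C, ∃ b ∈ C, a ≠ b ∧ G.Adj x a ∧ G.Adj y b) :
    HasCycleOn G {v | v = x ∨ v = y ∨ v ∈ B ∨ v ∈ C} := by
  obtain ⟨a, ha, b, hb, hab, hxa, hyb⟩ := hBadj
  obtain ⟨a', ha', b', hb', hab', hxa', hyb'⟩ := hCadj
  have hpathB := hasPathThrough_of_isClique hB ha hb hab hxa hyb
  have hpathC := hasPathThrough_of_isClique hC hb' ha' hab'.symm hyb' hxa'
  have hcycle := hasCycleOn_of_chain_hasPathThrough (G := G) (L := [(x, B), (y, C)]) (by simp)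
    (by simpa using ⟨hpathB, hpathC⟩) ?_
  · convert hcycle using 3
    simp only [List.mem_cons, List.not_mem_nil, or_false, exists_eq_or_imp, ↓existsAndEq, true_and]
    grind
  · rw [Finset.mem_union, not_or] at hx hy
    have hdisj : ∀ v ∈ B, v ∉ C := fun _ hv ↦ Finset.disjoint_left.1 hBC hv
    simp only [List.flatMap_cons, List.flatMap_nil, List.append_nil, List.cons_append,
      List.nodup_cons, List.nodup_append, List.mem_append, List.mem_cons, Finset.mem_toList,
      B.nodup_toList, C.nodup_toList]
    grind

variable [Fintype V] [DecidableEq V] {S : Finset V}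

/-- A cluster cut all of whose parts, except for `D₁` and `D₂`, consist of a single vertex. -/
structure IsTwoClusterCut (G : SimpleGraph V) (P : Finpartition Sᶜ) (D₁ D₂ : Finset V) : Prop
    extends IsClusterCut G P where
  mem_left : D₁ ∈ P.parts
  mem_right : D₂ ∈ P.parts
  ne : D₁ ≠ D₂
  nontrivial_left : D₁.Nontrivial
  nontrivial_right : D₂.Nontrivial
  card_le_one : ∀ F ∈ P.parts, F ≠ D₁ → F ≠ D₂ → F.card ≤ 1

/-- The vertices of `S` that have too few neighbors in `D` to be absorbed into a cycle through
`D`. -/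
def lowVerts (G : SimpleGraph V) (S D : Finset V) : Set V :=
  {y | y ∈ S ∧ (↑D ∩ G.neighborSet y).ncard ≤ G.indepNum}

namespace IsTwoClusterCut

variable {P : Finpartition Sᶜ} {D₁ D₂ : Finset V}

theorem symm (hP : IsTwoClusterCut G P D₁ D₂) : IsTwoClusterCut G P D₂ D₁ :=
  ⟨hP.toIsClusterCut, hP.mem_right, hP.mem_left, hP.ne.symm, hP.nontrivial_right,
    hP.nontrivial_left, fun F hF h₁ h₂ ↦ hP.card_le_one F hF h₂ h₁⟩

theorem disjoint (hP : IsTwoClusterCut G P D₁ D₂) : Disjoint D₁ D₂ :=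
  P.disjoint hP.mem_left hP.mem_right hP.ne

theorem two_mul_indepNum_add_two_le (hP : IsTwoClusterCut G P D₁ D₂) (ht : IsTough 11 G)
    (hS : 4 * S.card ≤ 3 * Fintype.card V) : 2 * G.indepNum + 2 ≤ D₁.card + D₂.card := by
  have hpair : {D₁, D₂} ⊆ P.parts := by
    simp [Finset.insert_subset_iff, hP.mem_left, hP.mem_right]
  have card_rest : (P.parts \ {D₁, D₂}).card + 2 = P.parts.card := by
    rw [← Finset.card_sdiff_add_card_eq_card hpair, Finset.card_pair hP.ne]
  have sum_rest : ∑ E ∈ P.parts \ {D₁, D₂}, E.card ≤ (P.parts \ {D₁, D₂}).card • 1 :=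
    Finset.sum_le_card_nsmul _ _ _ fun E hE ↦ by
      obtain ⟨hE, hne⟩ := Finset.mem_sdiff.1 hE
      rw [Finset.mem_insert, Finset.mem_singleton, not_or] at hne
      exact hP.card_le_one E hE hne.1 hne.2
  have hsum := P.sum_card_parts
  rw [← Finset.sum_sdiff hpair, Finset.sum_pair hP.ne] at hsum
  have hparts : 11 * P.parts.card ≤ S.card := by exact_mod_cast hP.mul_card_parts_le ht
  have hindep := hP.mul_indepNum_le ht
  have := Finset.card_add_card_compl S
  rw [smul_eq_mul, mul_one] at sum_rest
  omega

theorem almostDominates_of_adj (hP : IsTwoClusterCut G P D₁ D₂) (hfree : P2P3Free G) {x v : V}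
    (hx : x ∈ S) {F : Finset V} (hF : F ∈ P.parts) (hF₁ : F ≠ D₁) (hF₂ : F ≠ D₂) (hv : v ∈ F)
    (hxv : G.Adj x v) {E : Finset V} (hE : E ∈ P.parts) : AlmostDominates G x E := by
  by_contra hxE
  obtain rfl | hE₁ := eq_or_ne E D₁
  · exact ((hP.forall_adj_of_not_almostDominates hfree hx hE hxE hP.mem_right hP.nontrivial_right
      hP.ne.symm).2 F hF hF₁ hF₂).2 v hv hxv
  obtain rfl | hE₂ := eq_or_ne E D₂
  · exact ((hP.forall_adj_of_not_almostDominates hfree hx hE hxE hP.mem_left hP.nontrivial_left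
      hP.ne).2 F hF hF₂ hF₁).2 v hv hxv
  · exact hxE ((Finset.card_le_one_iff_subsingleton.1 (hP.card_le_one E hE hE₁ hE₂)).anti
      Set.sdiff_subset)

theorem ncard_inter_neighborSet (hP : IsTwoClusterCut G P D₁ D₂) (y : V) :
    (↑(D₁ ∪ D₂) ∩ G.neighborSet y).ncard =
      (↑D₁ ∩ G.neighborSet y).ncard + (↑D₂ ∩ G.neighborSet y).ncard := by
  rw [Finset.coe_union, Set.union_inter_distrib_right, Set.ncard_union_eq]
  exact (Finset.disjoint_coe.2 hP.disjoint).mono Set.inter_subset_left Set.inter_subset_left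

theorem forall_adj_of_mem_lowVerts (hP : IsTwoClusterCut G P D₁ D₂) (hfree : P2P3Free G)
    (hsize : 2 * G.indepNum + 2 ≤ D₁.card + D₂.card) (hD : D₂.card ≤ D₁.card) {y : V}
    (hy : y ∈ lowVerts G S (D₁ ∪ D₂)) :
    (∀ v ∈ D₂, G.Adj y v) ∧ ∀ F ∈ P.parts, F ≠ D₁ → F ≠ D₂ → ∀ v ∈ F, ¬ G.Adj y v := by
  obtain ⟨hy, hcard⟩ := hy
  have not_almostDominates : ¬ AlmostDominates G y D₁ := fun hD₁ ↦ by
    have card_D₁ := hD₁.card_le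
    have := hP.two_le_indepNum
    rw [hP.ncard_inter_neighborSet] at hcard
    by_cases hD₂ : AlmostDominates G y D₂
    · have card_D₂ := hD₂.card_le
      omega
    · have hadj := (hP.forall_adj_of_not_almostDominates hfree hy hP.mem_right hD₂ hP.mem_left
        hP.nontrivial_left hP.ne).1
      have hsub : (D₁ : Set V) ⊆ ↑D₁ ∩ G.neighborSet y := fun v hv ↦ ⟨hv, hadj v hv⟩
      have := Set.ncard_le_ncard hsub
      rw [Set.ncard_coe_finset] at this
      omega
  obtain ⟨hadj, hrest⟩ := hP.forall_adj_of_not_almostDominates hfree hy hP.mem_left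
    not_almostDominates hP.mem_right hP.nontrivial_right hP.ne.symm
  exact ⟨hadj, fun F hF h₁ h₂ ↦ (hrest F hF h₁ h₂).2⟩

theorem adj_of_mem_lowVerts (hP : IsTwoClusterCut G P D₁ D₂) (hfree : P2P3Free G)
    (hsize : 2 * G.indepNum + 2 ≤ D₁.card + D₂.card) (hD : D₂.card ≤ D₁.card) {y z : V}
    (hyz : y ≠ z) (hy : y ∈ lowVerts G S (D₁ ∪ D₂)) (hz : z ∈ lowVerts G S (D₁ ∪ D₂)) :
    G.Adj y z := by
  have hyD₂ := (hP.forall_adj_of_mem_lowVerts hfree hsize hD hy).1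
  have hzD₂ := (hP.forall_adj_of_mem_lowVerts hfree hsize hD hz).1
  by_contra hadj
  obtain ⟨v, hv⟩ := hP.nontrivial_right.nonempty
  have hrest : ((D₁ : Set V) \ (G.neighborSet y ∪ G.neighborSet z)).Subsingleton := by
    rintro p ⟨hp, hp'⟩ q ⟨hq, hq'⟩
    by_contra hpq
    obtain ⟨a, ha, b, hb, hab⟩ := hfree.exists_adj (hP.isClique D₁ hP.mem_left hp hq hpq)
      (hyD₂ v hv) (hzD₂ v hv).symm hyz hadj
    have haD₁ : a ∈ D₁ := by rcases ha with rfl | rfl <;> assumption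
    have haN : a ∉ G.neighborSet y ∪ G.neighborSet z := by rcases ha with rfl | rfl <;> assumption
    rcases hb with rfl | rfl | rfl
    · exact haN (.inl hab.symm)
    · exact hP.ne (hP.eq_of_adj hP.mem_left hP.mem_right haD₁ hv hab)
    · exact haN (.inr hab.symm)
  have card_D₁ : D₁.card ≤
      (↑D₁ ∩ G.neighborSet y).ncard + (↑D₁ ∩ G.neighborSet z).ncard + 1 := by
    have hsplit := Set.ncard_inter_add_ncard_sdiff_eq_ncard (D₁ : Set V)
      (G.neighborSet y ∪ G.neighborSet z)
    rw [Set.ncard_coe_finset, Set.inter_union_distrib_left] at hsplit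
    rw [← hsplit]
    gcongr
    · exact Set.ncard_union_le _ _
    · exact Set.ncard_le_one_iff_subsingleton.2 hrest
  have card_D₂ {w : V} (hw : ∀ v ∈ D₂, G.Adj w v) : D₂.card ≤ (↑D₂ ∩ G.neighborSet w).ncard := by
    rw [← Set.ncard_coe_finset]
    exact Set.ncard_le_ncard fun v hv ↦ ⟨hv, hw v hv⟩
  have hycard := hP.ncard_inter_neighborSet y ▸ hy.2
  have hzcard := hP.ncard_inter_neighborSet z ▸ hz.2
  have := card_D₂ hyD₂
  have := card_D₂ hzD₂
  have := hP.nontrivial_right.nonempty.card_pos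
  omega

theorem isClique_union_lowVerts (hP : IsTwoClusterCut G P D₁ D₂) (hfree : P2P3Free G)
    (hsize : 2 * G.indepNum + 2 ≤ D₁.card + D₂.card) (hD : D₂.card ≤ D₁.card) :
    G.IsClique (↑D₂ ∪ lowVerts G S (D₁ ∪ D₂)) :=
  have : Std.Symm G.Adj := ⟨fun _ _ h ↦ h.symm⟩
  Set.pairwise_union_of_symm.2 ⟨hP.isClique D₂ hP.mem_right,
    fun _ hy _ hz hyz ↦ hP.adj_of_mem_lowVerts hfree hsize hD hyz hy hz,
    fun v hv _ hy _ ↦ ((hP.forall_adj_of_mem_lowVerts hfree hsize hD hy).1 v hv).symm⟩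

theorem exists_hasCycleOn (hP : IsTwoClusterCut G P D₁ D₂) (hfree : P2P3Free G) {t : ℝ}
    (ht : IsTough t G) (ht₁ : 1 ≤ t) (hsize : 2 * G.indepNum + 2 ≤ D₁.card + D₂.card)
    (hD : D₂.card ≤ D₁.card) :
    ∃ X ⊆ S, X.card ≤ 2 ∧ HasCycleOn G (↑X ∪ ↑(D₁ ∪ D₂) ∪ lowVerts G S (D₁ ∪ D₂)) := by
  obtain ⟨x, hx, y, hy, hxy, hadj₁, a, ha, b, hb, hab⟩ := hP.exists_distinct_adj ht ht₁
    hP.mem_left hP.nontrivial_left hP.mem_right hP.nontrivial_right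
  obtain ⟨L, hL⟩ := (lowVerts G S (D₁ ∪ D₂)).toFinite.exists_finset_coe
  have mem_L {z : V} : z ∈ L ↔ z ∈ lowVerts G S (D₁ ∪ D₂) := by rw [← hL, Finset.mem_coe]
  have isClique_W : G.IsClique (D₂ ∪ (L \ {x, y}) : Finset V) := by
    refine (hP.isClique_union_lowVerts hfree hsize hD).subset ?_
    rw [Finset.coe_union, ← hL]
    gcongr
    exact Finset.sdiff_subset
  have notMem_D₁ {z : V} (hz : z ∈ S) : z ∉ D₁ := fun h ↦ notMem_of_mem_parts hP.mem_left h hz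
  have notMem_D₂ {z : V} (hz : z ∈ S) : z ∉ D₂ := fun h ↦ notMem_of_mem_parts hP.mem_right h hz
  have disjoint_W : Disjoint D₁ (D₂ ∪ (L \ {x, y})) := by
    refine Finset.disjoint_union_right.2 ⟨hP.disjoint, Finset.disjoint_right.2 fun z hz ↦ ?_⟩
    exact notMem_D₁ (mem_L.1 (Finset.mem_sdiff.1 hz).1).1
  have notMem {z : V} (hz : z ∈ S) (hzxy : z ∈ ({x, y} : Finset V)) :
      z ∉ D₁ ∪ (D₂ ∪ (L \ {x, y})) := by
    simp only [Finset.mem_union, Finset.mem_sdiff, notMem_D₁ hz, notMem_D₂ hz, hzxy, not_true,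
      and_false, or_false, not_false_eq_true]
  have hcycle := hasCycleOn_of_isClique_of_isClique (hP.isClique D₁ hP.mem_left) isClique_W
    disjoint_W hxy (notMem hx (by simp)) (notMem hy (by simp)) hadj₁
    ⟨a, Finset.mem_union_left _ ha, b, Finset.mem_union_left _ hb, hab⟩
  refine ⟨{x, y}, by simp [Finset.insert_subset_iff, hx, hy], Finset.card_le_two, ?_⟩
  convert hcycle using 1
  ext v
  simp only [← hL, Set.mem_union, Finset.mem_coe, Finset.mem_insert, Finset.mem_singleton,
    Finset.mem_union, Finset.mem_sdiff, Set.mem_ofPred_eq]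
  grind

theorem hasCycleOn_univ (hP : IsTwoClusterCut G P D₁ D₂) (hfree : P2P3Free G)
    (ht : IsTough 11 G) (hS : 4 * S.card ≤ 3 * Fintype.card V) (hD : D₂.card ≤ D₁.card) :
    HasCycleOn G Set.univ := by
  have hsize := hP.two_mul_indepNum_add_two_le ht hS
  obtain ⟨X, hXS, hX, hA⟩ := hP.exists_hasCycleOn hfree ht (by norm_num) hsize hD
  have hrest {E : Finset V} (hE : E ∈ P.parts \ {D₁, D₂}) : E ∈ P.parts ∧ E ≠ D₁ ∧ E ≠ D₂ := by
    simpa using hE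
  have hcard : ∀ E ∈ P.parts \ {D₁, D₂}, E.card ≤ 2 := fun E hE ↦ by
    obtain ⟨hE, h₁, h₂⟩ := hrest hE
    exact (hP.card_le_one E hE h₁ h₂).trans one_le_two
  obtain ⟨σ, hσ, hσX⟩ := hP.exists_isLinkage (ht.mono (by norm_num)) Finset.sdiff_subset hcard
    hP.mem_left (by simp) hX
  have hdom (i) : ∀ E ∈ P.parts, AlmostDominates G (σ i) E := fun E ↦ by
    obtain ⟨v, hv, hadj⟩ := hσ.exists_adj i
    obtain ⟨hE, h₁, h₂⟩ := hrest i.1.2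
    exact hP.almostDominates_of_adj hfree (hσ.mem i) hE h₁ h₂ hv hadj
  have parts_sdiff : {v | ∃ E ∈ P.parts \ (P.parts \ {D₁, D₂}), v ∈ E} = ↑(D₁ ∪ D₂) := by
    rw [Finset.sdiff_sdiff_eq_self (by
      simp [Finset.insert_subset_iff, hP.mem_left, hP.mem_right])]
    ext v
    simp
  refine hP.hasCycleOn_univ_of_isLinkage ht hS Finset.sdiff_subset hcard hσ hdom
    (C := ↑X ∪ lowVerts G S (D₁ ∪ D₂)) (Set.union_subset hXS fun v hv ↦ hv.1) ?_ ?_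
    fun y hy hyC ↦ ?_
  · rwa [parts_sdiff, Set.union_right_comm]
  · rintro i (h | h)
    · exact hσX i h
    · obtain ⟨v, hv, hadj⟩ := hσ.exists_adj i
      obtain ⟨hE, h₁, h₂⟩ := hrest i.1.2
      exact (hP.forall_adj_of_mem_lowVerts hfree hsize hD h).2 _ hE h₁ h₂ v hv hadj
  · rw [parts_sdiff]
    by_contra! hlow
    exact hyC (.inr ⟨hy, hlow⟩)

end IsTwoClusterCut

end TwoClusters

section Main

variable [Fintype V] [DecidableEq V]

theorem IsClusterCut.hasCycleOn_univ {S : Finset V} {P : Finpartition Sᶜ} (hP : IsClusterCut G P)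
    (hfree : P2P3Free G) (ht : IsTough 11 G) (hS : 4 * S.card ≤ 3 * Fintype.card V) :
    HasCycleOn G Set.univ := by
  by_cases! hdom : ∀ x ∈ S, ∀ E ∈ P.parts, AlmostDominates G x E
  · exact hP.hasCycleOn_univ_of_forall_almostDominates ht hS hdom
  obtain ⟨x, hx, D₁, hD₁, hxD₁⟩ := hdom
  obtain ⟨D₂, hD₂, hne, hnt₂⟩ := hP.exists_nontrivial_ne D₁
  have hnt₁ : D₁.Nontrivial := (Set.not_subsingleton_iff.1 hxD₁).mono Set.sdiff_subset
  obtain ⟨-, hrest⟩ := hP.forall_adj_of_not_almostDominates hfree hx hD₁ hxD₁ hD₂ hnt₂ hne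
  have hP₁₂ : IsTwoClusterCut G P D₁ D₂ :=
    ⟨hP, hD₁, hD₂, hne.symm, hnt₁, hnt₂, fun F hF h₁ h₂ ↦ (hrest F hF h₁ h₂).1⟩
  obtain hD | hD := le_total D₂.card D₁.card
  · exact hP₁₂.hasCycleOn_univ hfree ht hS hD
  · exact hP₁₂.symm.hasCycleOn_univ hfree ht hS hD

theorem stmt10_general (G : SimpleGraph V) (htough : IsTough 11 G) (hfree : P2P3Free G)
    (S : Finset V) (hS : (S.card : ℝ) ≤ 3 * (Fintype.card V : ℝ) / 4)
    (hcomps : ∃ D₁ D₂ : (G.induce ((↑S : Set V)ᶜ)).ConnectedComponent, D₁ ≠ D₂ ∧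
      D₁.supp.Nontrivial ∧ D₂.supp.Nontrivial) :
    G.IsHamiltonian := by
  obtain ⟨D₁, D₂, hne, h₁, h₂⟩ := hcomps
  obtain ⟨T, hTS, P, hP⟩ :=
    hfree.exists_isClusterCut (separatesEdges_of_connectedComponent hne h₁ h₂)
  have hcard : 4 * S.card ≤ 3 * Fintype.card V := by
    rw [le_div_iff₀' four_pos] at hS
    exact_mod_cast hS
  have hT : 4 * T.card ≤ 3 * Fintype.card V :=
    (Nat.mul_le_mul_left 4 (Finset.card_le_card hTS)).trans hcard
  have := hP.two_le_indepNum
  have := hP.mul_indepNum_le htough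
  exact (hP.hasCycleOn_univ hfree htough hT).isHamiltonian (by omega)

end Main

theorem stmt10 [Fintype V] [DecidableEq V] (G : SimpleGraph V) [DecidableRel G.Adj]
    (hn : 31 ≤ Fintype.card V) (htough : IsTough 15 G) (hfree : P2P3Free G)
    (S : Finset V) (hcut : 2 ≤ numComponents G S)
    (hS : (S.card : ℝ) ≤ 3 * (Fintype.card V : ℝ) / 4)
    (hcliques : ∃ D1 D2 : (G.induce ((↑S : Set V)ᶜ)).ConnectedComponent, D1 ≠ D2 ∧
      G.IsClique (Subtype.val '' D1.supp) ∧ G.IsClique (Subtype.val '' D2.supp) ∧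
      2 ≤ (Subtype.val '' D1.supp).ncard ∧ 2 ≤ (Subtype.val '' D2.supp).ncard)
    (hdeg : ∀ u w, G.Adj u w → S.card ≤ G.degree u + G.degree w) :
    G.IsHamiltonian := by
  obtain ⟨D₁, D₂, hne, -, -, h₁, h₂⟩ := hcliques
  exact stmt10_general G (htough.mono (by norm_num)) hfree S hS ⟨D₁, D₂, hne,
    Set.nontrivial_of_image _ _ (Set.one_lt_ncard_iff_nontrivial.1 h₁),
    Set.nontrivial_of_image _ _ (Set.one_lt_ncard_iff_nontrivial.1 h₂)⟩
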